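/- Let q run through all prime powers with q ≡ 1 (mod 4). Then σ(q)/q² converges to 953·2⁻¹⁵; that is, for every real ε > 0 there exists N such that for every prime power q with q ≡ 1 (mod 4) and q > N one has |σ(q)/q² − 953/2¹⁵| < ε. -/

import Mathlib

open scoped Classical

noncomputable section

/-- The operation of the quasigroup `Q_{a,b}`:
`u*v = u + a(v-u)` if `v-u` is a square, `u*v = u + b(v-u)` otherwise. -/
def qop {F : Type*} [Field F] (a b u v : F) : F :=
  if IsSquare (v - u) then u + a * (v - u) else u + b * (v - u)

/-- The set `Σ(F)` of pairs `(a,b)` with `a ≠ b`, `a,b ∉ {0,1}`, and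
`ab` and `(1-a)(1-b)` both squares. -/
def SigSet (F : Type*) [Field F] : Set (F × F) :=
  {p | p.1 ≠ p.2 ∧ p.1 ≠ 0 ∧ p.1 ≠ 1 ∧ p.2 ≠ 0 ∧ p.2 ≠ 1 ∧
    IsSquare (p.1 * p.2) ∧ IsSquare ((1 - p.1) * (1 - p.2))}

/-- `Q_{a,b}` is maximally nonassociative. -/
def MaxNA {F : Type*} [Field F] (a b : F) : Prop :=
  ∀ u v w : F, qop a b (qop a b u v) w = qop a b u (qop a b v w) → u = v ∧ v = w

/-- `σ(q)`: the number of pairs `(a,b) ∈ Σ` for which `Q_{a,b}` is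
maximally nonassociative. -/
def sigmaCount (F : Type*) [Field F] : ℕ :=
  Set.ncard {p : F × F | p ∈ SigSet F ∧ MaxNA p.1 p.2}


section Stepanov
open Polynomial

lemma st_pow_dvd {F : Type*} [Field F] (f : F[X]) (n : ℕ) :
    ∀ k, f ^ (n - k) ∣ hasseDeriv k (f ^ n) := by
  induction n with
  | zero => intro k; simp
  | succ n ih =>
    intro k
    rw [pow_succ, hasseDeriv_mul]
    refine Finset.dvd_sum fun ij hij => ?_
    rw [Finset.HasAntidiagonal.mem_antidiagonal] at hij
    obtain ⟨i, j⟩ := ij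
    simp only at hij ⊢
    rcases Nat.eq_zero_or_pos j with hj | hj
    · subst hj
      rw [hasseDeriv_zero']
      refine dvd_trans ?_ (mul_dvd_mul_right (ih i) f)
      rw [← pow_succ]
      exact pow_dvd_pow _ (by omega)
    · refine dvd_trans ?_ (Dvd.dvd.mul_right (ih i) _)
      exact pow_dvd_pow _ (by omega)

lemma st_g {F : Type*} [Field F] (f : F[X]) (hf : f ≠ 0) (c i : ℕ) (hi : i ≤ c) :
    ∃ g : F[X], hasseDeriv i (f ^ c) = f ^ (c - i) * g ∧ g.natDegree ≤ i * f.natDegree := by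
  obtain ⟨g, hg⟩ := st_pow_dvd f c i
  refine ⟨g, hg, ?_⟩
  by_cases h0 : g = 0
  · simp [h0]
  have h1 := natDegree_hasseDeriv_le (f ^ c) i
  rw [hg, natDegree_mul (pow_ne_zero _ hf) h0, natDegree_pow, natDegree_pow] at h1
  obtain ⟨e, rfl⟩ := Nat.exists_eq_add_of_le hi
  have h2 : i + e - i = e := by omega
  rw [h2, add_mul] at h1
  omega

/-- polynomial with prescribed coefficients -/
def stPol (F : Type*) [Field F] (D : ℕ) : (Fin D → F) →ₗ[F] F[X] :=
  (degreeLT F D).subtype ∘ₗ (degreeLTEquiv F D).symm.toLinearMap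

lemma stPol_degree {F : Type*} [Field F] (D : ℕ) (v : Fin D → F) : (stPol F D v).degree < D := by
  have := ((degreeLTEquiv F D).symm v).2
  rw [mem_degreeLT] at this
  exact this

lemma stPol_natDegree {F : Type*} [Field F] (D : ℕ) (v : Fin D → F) :
    (stPol F D v).natDegree ≤ D - 1 := by
  by_cases h : stPol F D v = 0
  · simp [h]
  · have := stPol_degree D v
    rw [degree_eq_natDegree h] at this
    have : (stPol F D v).natDegree < D := by exact_mod_cast this
    omega

lemma stPol_eq_zero {F : Type*} [Field F] (D : ℕ) (v : Fin D → F) (h : stPol F D v = 0) : v = 0 := by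
  have h' : (((degreeLTEquiv F D).symm v : degreeLT F D) : F[X]) = 0 := h
  have h2 : (degreeLTEquiv F D).symm v = 0 := Subtype.ext h'
  simpa using h2

/-- the linear map encoding the `k`-th vanishing condition -/
def stE {F : Type*} [Field F] (f : F[X]) (g : ℕ → F[X]) (av : F) (J D k : ℕ) :
    (Fin J → (Fin D → F) × (Fin D → F)) →ₗ[F] F[X] :=
  ∑ j : Fin J, LinearMap.mulLeft F ((X : F[X]) ^ (j : ℕ)) ∘ₗ
    (LinearMap.mulLeft F (f ^ k) ∘ₗ hasseDeriv k ∘ₗ stPol F D ∘ₗ LinearMap.fst F _ _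
     + av • ∑ i ∈ Finset.HasAntidiagonal.antidiagonal k,
        LinearMap.mulLeft F (f ^ (k - i.1) * g i.1) ∘ₗ hasseDeriv i.2 ∘ₗ stPol F D ∘ₗ
          LinearMap.snd F _ _) ∘ₗ LinearMap.proj j

lemma stE_apply {F : Type*} [Field F] (f : F[X]) (g : ℕ → F[X]) (av : F) (J D k : ℕ) (v) :
    stE f g av J D k v = ∑ j : Fin J, X ^ (j : ℕ) * (f ^ k * hasseDeriv k (stPol F D (v j).1)
      + C av * ∑ i ∈ Finset.HasAntidiagonal.antidiagonal k, f ^ (k - i.1) * g i.1 *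
        hasseDeriv i.2 (stPol F D (v j).2)) := by
  simp [stE, LinearMap.sum_apply, smul_eq_C_mul, mul_assoc]

lemma stE_natDegree {F : Type*} [Field F] (f : F[X]) (g : ℕ → F[X]) (av : F) (J D k l m : ℕ)
    (hm : f.natDegree ≤ m) (hk : k < l)
    (hg : ∀ i ≤ k, (g i).natDegree ≤ i * f.natDegree) (v) :
    (stE f g av J D k v).natDegree ≤ D + J + l * m := by
  rw [stE_apply]
  refine natDegree_sum_le_of_forall_le _ _ fun j _ => ?_
  have hj := j.2
  have key : ∀ p : F[X], p.natDegree ≤ k * m + D → (X ^ (j : ℕ) * p).natDegree ≤ D + J + l * m := by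
    intro p hp
    refine natDegree_mul_le.trans ?_
    rw [natDegree_X_pow]
    have : k * m ≤ l * m := Nat.mul_le_mul_right _ hk.le
    omega
  apply key
  refine (natDegree_add_le _ _).trans (max_le ?_ ?_)
  · refine natDegree_mul_le.trans ?_
    have h1 : (f ^ k).natDegree ≤ k * m := natDegree_pow_le.trans (Nat.mul_le_mul_left _ hm)
    have h2 := natDegree_hasseDeriv_le (stPol F D (v j).1) k
    have h3 := stPol_natDegree D (v j).1
    omega
  · refine (natDegree_C_mul_le _ _).trans ?_
    refine natDegree_sum_le_of_forall_le _ _ fun i hi => ?_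
    rw [Finset.HasAntidiagonal.mem_antidiagonal] at hi
    refine natDegree_mul_le.trans ?_
    have h1 : (f ^ (k - i.1) * g i.1).natDegree ≤ k * m := by
      refine natDegree_mul_le.trans ?_
      have h1 : (f ^ (k - i.1)).natDegree ≤ (k - i.1) * m :=
        natDegree_pow_le.trans (Nat.mul_le_mul_left _ hm)
      have h2 := (hg i.1 (by omega)).trans (Nat.mul_le_mul_left i.1 hm)
      have h3 : k * m = (k - i.1) * m + i.1 * m := by rw [← add_mul]; congr 1; omega
      omega
    have h2 := natDegree_hasseDeriv_le (stPol F D (v j).2) i.2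
    have h3 := stPol_natDegree D (v j).2
    omega

/-- Stepanov's auxiliary polynomial -/
def stP {F : Type*} [Field F] (f : F[X]) (c q J D : ℕ) (v : Fin J → (Fin D → F) × (Fin D → F)) :
    F[X] := ∑ j : Fin J, (stPol F D (v j).1 + stPol F D (v j).2 * f ^ c) * (X ^ q) ^ (j : ℕ)

lemma stP_natDegree {F : Type*} [Field F] (f : F[X]) (c q J D m : ℕ) (v)
    (hm : f.natDegree ≤ m) : (stP f c q J D v).natDegree ≤ D + m * c + J * q := by
  refine natDegree_sum_le_of_forall_le _ _ fun j _ => ?_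
  refine natDegree_mul_le.trans ?_
  have h1 : (((X : F[X]) ^ q) ^ (j : ℕ)).natDegree ≤ J * q := by
    rw [← pow_mul, natDegree_X_pow, mul_comm]
    exact Nat.mul_le_mul_right _ j.2.le
  have h2 : (stPol F D (v j).1 + stPol F D (v j).2 * f ^ c).natDegree ≤ D + m * c := by
    refine (natDegree_add_le _ _).trans (max_le ?_ ?_)
    · have := stPol_natDegree D (v j).1; omega
    · refine natDegree_mul_le.trans ?_
      have := stPol_natDegree D (v j).2
      have h1 : (f ^ c).natDegree ≤ c * m := natDegree_pow_le.trans (Nat.mul_le_mul_left _ hm)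
      rw [mul_comm m c]; omega
  omega

lemma stP_ne_zero {F : Type*} [Field F] [Fintype F] (f : F[X]) (c J D m : ℕ)
    (hq : Fintype.card F = 2 * c + 1) (hm : f.natDegree ≤ m) (hD : 2 * D + m ≤ 2 * c + 1) (hD0 : 0 < D)
    (hns : ∀ r s : F[X], r ^ 2 * f = C (f.eval 0) * s ^ 2 → r = 0 ∧ s = 0)
    (v : Fin J → (Fin D → F) × (Fin D → F)) (hv : v ≠ 0) :
    stP f c (Fintype.card F) J D v ≠ 0 := by
  intro hP
  set q := Fintype.card F with hqd
  have hex : ∃ n : ℕ, ∃ h : n < J, v ⟨n, h⟩ ≠ 0 := by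
    by_contra hcon
    push Not at hcon
    exact hv (funext fun j => hcon j.1 j.2)
  obtain ⟨hn, hvn⟩ := Nat.find_spec hex
  set n := Nat.find hex with hndef
  set j0 : Fin J := ⟨n, hn⟩
  set r := stPol F D (v j0).1 with hr
  set s := stPol F D (v j0).2 with hs
  have hmin : ∀ j : Fin J, (j : ℕ) < n → v j = 0 := by
    intro j hj
    have := Nat.find_min hex hj
    push Not at this
    exact this j.2
  have hdiv : ((X : F[X]) ^ q) ^ (n + 1) ∣ (r + s * f ^ c) * (X ^ q) ^ n := by
    have hsum : (r + s * f ^ c) * (X ^ q) ^ n = - ∑ j ∈ Finset.univ.erase j0,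
        (stPol F D (v j).1 + stPol F D (v j).2 * f ^ c) * (X ^ q) ^ (j : ℕ) := by
      rw [eq_neg_iff_add_eq_zero]
      rw [stP, ← Finset.add_sum_erase _ _ (Finset.mem_univ j0)] at hP
      exact hP
    rw [hsum, dvd_neg]
    refine Finset.dvd_sum fun j hj => ?_
    have hjne : j ≠ j0 := Finset.ne_of_mem_erase hj
    rcases lt_trichotomy (j : ℕ) n with h | h | h
    · rw [hmin j h]; simp
    · exact absurd (Fin.ext h) hjne
    · exact Dvd.dvd.mul_left (pow_dvd_pow _ h) _
  have hX : ((X : F[X]) ^ q) ^ n ≠ 0 := pow_ne_zero _ (pow_ne_zero _ X_ne_zero)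
  rw [pow_succ', mul_dvd_mul_iff_right hX] at hdiv
  have hfq : (X : F[X]) ^ q ∣ f ^ q - C (f.eval 0) := by
    rw [← FiniteField.expand_card f]
    have h1 : (X : F[X]) ∣ f - C (f.eval 0) := by
      rw [X_dvd_iff]; simp [coeff_zero_eq_eval_zero]
    obtain ⟨w, hw⟩ := h1
    have h2 := congrArg (expand F q) hw
    rw [map_sub, expand_C, map_mul, expand_X] at h2
    rw [h2]; exact dvd_mul_right _ _
  have hfin : (X : F[X]) ^ q ∣ r ^ 2 * f - C (f.eval 0) * s ^ 2 := by
    have : r ^ 2 * f - C (f.eval 0) * s ^ 2 =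
        (r + s * f ^ c) * ((r - s * f ^ c) * f) + (f ^ q - C (f.eval 0)) * s ^ 2 := by
      rw [hq]; ring
    rw [this]
    exact dvd_add (Dvd.dvd.mul_right hdiv _) (Dvd.dvd.mul_right hfq _)
  have hdr : r.natDegree ≤ D - 1 := stPol_natDegree D _
  have hds : s.natDegree ≤ D - 1 := stPol_natDegree D _
  have hz : r ^ 2 * f - C (f.eval 0) * s ^ 2 = 0 := by
    refine eq_zero_of_dvd_of_natDegree_lt hfin ?_
    rw [natDegree_X_pow]
    refine lt_of_le_of_lt (natDegree_sub_le _ _) (max_lt ?_ ?_)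
    · refine lt_of_le_of_lt natDegree_mul_le ?_
      have := natDegree_pow_le (p := r) (n := 2)
      omega
    · refine lt_of_le_of_lt (natDegree_C_mul_le _ _) ?_
      have := natDegree_pow_le (p := s) (n := 2)
      omega
  obtain ⟨hr0, hs0⟩ := hns r s (sub_eq_zero.mp hz)
  exact hvn (Prod.ext (stPol_eq_zero D _ hr0) (stPol_eq_zero D _ hs0))

lemma stP_dvd {F : Type*} [Field F] [Fintype F] (f : F[X]) (g : ℕ → F[X]) (av : F) (c J D l : ℕ)
    (hl : l ≤ c) (hq : Fintype.card F = 2 * c + 1)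
    (hg : ∀ i ≤ c, hasseDeriv i (f ^ c) = f ^ (c - i) * g i)
    (v : Fin J → (Fin D → F) × (Fin D → F))
    (hE : ∀ k < l, stE f g av J D k v = 0) (x : F) (hx : f.eval x ≠ 0) (hxa : (f.eval x) ^ c = av) :
    (X - C x) ^ l ∣ stP f c (Fintype.card F) J D v := by
  set q := Fintype.card F with hqd
  set Px : F[X] := ∑ j : Fin J, C (x ^ (j : ℕ)) *
    (stPol F D (v j).1 + f ^ c * stPol F D (v j).2) with hPx
  have h1 : (X - C x) ^ l ∣ stP f c q J D v - Px := by
    rw [stP, hPx, ← Finset.sum_sub_distrib]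
    refine Finset.dvd_sum fun j _ => ?_
    have h2 : (X : F[X]) ^ q - C x = (X - C x) ^ q := by
      rw [← FiniteField.expand_card (X - C x), map_sub, expand_X, expand_C]
    have h3 : (X - C x) ^ q ∣ (X ^ q) ^ (j : ℕ) - C x ^ (j : ℕ) := by
      rw [← h2]; exact sub_dvd_pow_sub_pow _ _ _
    have h4 : (stPol F D (v j).1 + stPol F D (v j).2 * f ^ c) * (X ^ q) ^ (j : ℕ) -
        C (x ^ (j : ℕ)) * (stPol F D (v j).1 + f ^ c * stPol F D (v j).2) =
        (stPol F D (v j).1 + stPol F D (v j).2 * f ^ c) * ((X ^ q) ^ (j : ℕ) - C x ^ (j : ℕ)) := by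
      rw [C_pow]; ring
    rw [h4]
    exact Dvd.dvd.mul_left ((pow_dvd_pow _ (by omega)).trans h3) _
  have h5 : (X - C x) ^ l ∣ Px := by
    rw [X_sub_C_pow_dvd_iff, ← taylor_apply, X_pow_dvd_iff]
    intro k hk
    rw [taylor_coeff]
    have h6 : f.eval x ^ k * (hasseDeriv k Px).eval x = (stE f g av J D k v).eval x := by
      rw [hPx, stE_apply, map_sum, eval_finsetSum, eval_finsetSum, Finset.mul_sum]
      refine Finset.sum_congr rfl fun j _ => ?_
      rw [← smul_eq_C_mul, map_smul, map_add, hasseDeriv_mul]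
      simp only [eval_smul, eval_add, eval_mul, eval_pow, eval_X, eval_C, eval_finsetSum,
        smul_eq_mul]
      have h7 : ∀ i ∈ Finset.HasAntidiagonal.antidiagonal k, f.eval x ^ k * (eval x (hasseDeriv i.1 (f ^ c)) *
          eval x (hasseDeriv i.2 (stPol F D (v j).2))) =
          av * (f.eval x ^ (k - i.1) * eval x (g i.1) *
            eval x (hasseDeriv i.2 (stPol F D (v j).2))) := by
        intro i hi
        rw [Finset.HasAntidiagonal.mem_antidiagonal] at hi
        rw [hg i.1 (by omega), eval_mul, eval_pow, ← hxa]
        have e1 : f.eval x ^ k = f.eval x ^ (k - i.1) * f.eval x ^ i.1 := by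
          rw [← pow_add]; congr 1; omega
        have e2 : f.eval x ^ c = f.eval x ^ (c - i.1) * f.eval x ^ i.1 := by
          rw [← pow_add]; congr 1; omega
        rw [e1, e2]; ring
      have h8 := Finset.sum_congr rfl h7
      rw [← Finset.mul_sum, ← Finset.mul_sum] at h8
      rw [← h8]; ring
    rw [hE k hk, eval_zero] at h6
    exact (mul_eq_zero.mp h6).resolve_left (pow_ne_zero _ hx)
  have := dvd_add h1 h5
  rwa [sub_add_cancel] at this

lemma stepanov_count {F : Type*} [Field F] [Fintype F] (f : F[X]) (av : F) (c J D l m : ℕ)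
    (hq : Fintype.card F = 2 * c + 1) (hm : f.natDegree ≤ m) (hD : 2 * D + m ≤ 2 * c + 1)
    (hD0 : 0 < D) (hl : l ≤ c)
    (hdim : l * (D + J + l * m + 1) < 2 * J * D)
    (h0 : f.eval 0 ≠ 0)
    (hns : ∀ r s : F[X], r ^ 2 * f = C (f.eval 0) * s ^ 2 → r = 0 ∧ s = 0) :
    l * (Finset.univ.filter fun x : F => f.eval x ≠ 0 ∧ f.eval x ^ c = av).card ≤
      D + m * c + J * Fintype.card F := by
  have hf : f ≠ 0 := by rintro rfl; simp at h0
  have hgex : ∀ i, ∃ g : F[X], i ≤ c → (hasseDeriv i (f ^ c) = f ^ (c - i) * g ∧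
      g.natDegree ≤ i * f.natDegree) := by
    intro i
    by_cases hi : i ≤ c
    · obtain ⟨g, hg⟩ := st_g f hf c i hi
      exact ⟨g, fun _ => hg⟩
    · exact ⟨0, fun h => absurd h hi⟩
  choose g hg using hgex
  let M := D + J + l * m + 1
  let T : (Fin J → (Fin D → F) × (Fin D → F)) →ₗ[F] (Fin l → Fin M → F) :=
    LinearMap.pi fun k => LinearMap.pi fun i => lcoeff F i ∘ₗ stE f g av J D k
  have hker : T.ker ≠ ⊥ := by
    apply LinearMap.ker_ne_bot_of_finrank_lt
    simp only [Module.finrank_pi_fintype, Module.finrank_prod, Module.finrank_self,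
      Finset.sum_const, Finset.card_univ, Fintype.card_fin, smul_eq_mul, mul_one]
    calc l * M < 2 * J * D := hdim
      _ = J * (D + D) := by ring
  obtain ⟨v, hvk, hv⟩ := (Submodule.ne_bot_iff _).mp hker
  have hE : ∀ k < l, stE f g av J D k v = 0 := by
    intro k hk
    ext i
    rw [coeff_zero]
    by_cases hi : i < M
    · have h1 : T v = 0 := hvk
      have h2 := congrFun (congrFun h1 ⟨k, hk⟩) ⟨i, hi⟩
      exact h2
    · apply coeff_eq_zero_of_natDegree_lt
      have := stE_natDegree f g av J D k l m hm hk (fun i hi => (hg i (by omega)).2) v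
      omega
  have hP := stP_ne_zero f c J D m hq hm hD hD0 hns v hv
  set S := Finset.univ.filter fun x : F => f.eval x ≠ 0 ∧ f.eval x ^ c = av
  have hdvd : ∏ x ∈ S, (X - C x) ^ l ∣ stP f c (Fintype.card F) J D v := by
    apply Finset.prod_dvd_of_coprime
    · intro x _ y _ hxy
      exact (isCoprime_X_sub_C_of_isUnit_sub (sub_ne_zero.mpr hxy).isUnit).pow
    · intro x hx
      have hx' := (Finset.mem_filter.mp hx).2
      exact stP_dvd f g av c J D l hl hq (fun i hi => (hg i hi).1) v hE x hx'.1 hx'.2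
  have h1 := natDegree_le_of_dvd hdvd hP
  rw [natDegree_prod _ _ (fun x _ => pow_ne_zero _ (X_sub_C_ne_zero x))] at h1
  simp only [natDegree_pow, natDegree_X_sub_C, mul_one, Finset.sum_const, smul_eq_mul] at h1
  have h2 := stP_natDegree f c (Fintype.card F) J D m v hm
  rw [mul_comm]
  exact h1.trans h2

end Stepanov

section WeilWeak
open Polynomial

lemma ns_of_squarefree {F : Type*} [Field F] (f : F[X]) (hf : Squarefree f)
    (hdeg : 0 < f.natDegree) (c : F) (hc : c ≠ 0) :
    ∀ (n : ℕ) (r s : F[X]), r.natDegree ≤ n → r ^ 2 * f = C c * s ^ 2 → r = 0 ∧ s = 0 := by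
  have hf0 : f ≠ 0 := by rintro rfl; simp at hdeg
  have hu : IsUnit (C c : F[X]) := isUnit_C.mpr hc.isUnit
  have step : ∀ (r s : F[X]), r ^ 2 * f = C c * s ^ 2 →
      ∃ r' t, r = f * r' ∧ s = f * t ∧ r' ^ 2 * f = C c * t ^ 2 := by
    intro r s h
    have h1 : f ∣ s ^ 2 := by
      have : f ∣ C c * s ^ 2 := ⟨r ^ 2, by rw [← h]; ring⟩
      exact (hu.dvd_mul_left).mp this
    obtain ⟨t, rfl⟩ := hf.isRadical 2 s h1
    have h2 : r ^ 2 = C c * f * t ^ 2 := by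
      apply mul_right_cancel₀ hf0
      rw [h]; ring
    have h3 : f ∣ r ^ 2 := ⟨C c * t ^ 2, by rw [h2]; ring⟩
    obtain ⟨r', rfl⟩ := hf.isRadical 2 r h3
    refine ⟨r', t, rfl, rfl, ?_⟩
    apply mul_left_cancel₀ hf0
    linear_combination h2
  intro n
  induction n with
  | zero =>
    intro r s hr h
    obtain ⟨r', t, hr', ht, h'⟩ := step r s h
    have hr0 : r = 0 := by
      by_contra h0
      have h1 : r' ≠ 0 := by rintro rfl; simp at hr'; exact h0 hr'
      rw [hr', natDegree_mul hf0 h1] at hr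
      omega
    refine ⟨hr0, ?_⟩
    rw [hr0] at h
    simpa [hc] using h.symm
  | succ n ih =>
    intro r s hr h
    obtain ⟨r', t, hr', ht, h'⟩ := step r s h
    by_cases h1 : r' = 0
    · subst h1
      simp only [mul_zero] at hr'
      refine ⟨hr', ?_⟩
      rw [hr'] at h
      simpa [hc] using h.symm
    · rw [hr', natDegree_mul hf0 h1] at hr
      obtain ⟨e1, e2⟩ := ih r' t (by omega) h'
      exact absurd e1 h1

/-- weak Weil bound, for polynomials not vanishing at 0 -/
lemma weil_weak0 (m h : ℕ) (hh : 0 < h) (F : Type*) [Field F] [Fintype F]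
    (hodd : Fintype.card F % 2 = 1) (hN : 2 * (h * (h + 2 + 2 * h * m)) + m + 4 * h + 6 < Fintype.card F)
    (f : F[X]) (hm : f.natDegree ≤ m) (hsf : Squarefree f) (hdeg : 0 < f.natDegree)
    (h0 : f.eval 0 ≠ 0) :
    2 * (h : ℝ) * |∑ x : F, ((quadraticChar F (f.eval x) : ℤ) : ℝ)| ≤
      ((m : ℝ) + 3) * Fintype.card F + 2 * h * m := by
  have hf0 : f ≠ 0 := by rintro rfl; simp at hdeg
  obtain ⟨c, hc⟩ : ∃ c, Fintype.card F = 2 * c + 1 := ⟨Fintype.card F / 2, by omega⟩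
  have hchar : ringChar F ≠ 2 := by
    intro h2
    have := FiniteField.even_card_of_char_two h2
    omega
  obtain ⟨D, hD⟩ : ∃ D, D = (2 * c + 1 - m) / 2 := ⟨_, rfl⟩
  set q := Fintype.card F with hqd
  have hcount : ∀ av : F, (2 * h) * (Finset.univ.filter fun x : F => f.eval x ≠ 0 ∧
      f.eval x ^ c = av).card ≤ D + m * c + (h + 1) * q := by
    intro av
    refine stepanov_count f av c (h + 1) D (2 * h) m hc hm (by omega) (by omega) (by omega) ?_ h0 ?_
    · have : h * (h + 2 + 2 * h * m) < D := by omega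
      nlinarith
    · intro r s hrs
      exact ns_of_squarefree f hsf hdeg _ h0 _ r s le_rfl hrs
  set N1 := Finset.univ.filter fun x : F => f.eval x ≠ 0 ∧ f.eval x ^ c = 1
  set N2 := Finset.univ.filter fun x : F => f.eval x ≠ 0 ∧ f.eval x ^ c = -1
  set N0 := Finset.univ.filter fun x : F => f.eval x = 0
  have hN0 : N0.card ≤ m := by
    have : N0 ⊆ f.roots.toFinset := by
      intro x hx
      have := (Finset.mem_filter.mp hx).2
      simp [hf0, this]
    exact (Finset.card_le_card this).trans ((Multiset.toFinset_card_le _).trans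
      ((card_roots' f).trans hm))
  have hne : (1 : F) ≠ -1 := by
    intro h; exact Ring.neg_one_ne_one_of_char_ne_two hchar h.symm
  have hval : ∀ x : F, ((quadraticChar F (f.eval x) : ℤ) : ℝ) =
      (if f.eval x ≠ 0 ∧ f.eval x ^ c = 1 then (1 : ℝ) else 0) -
      (if f.eval x ≠ 0 ∧ f.eval x ^ c = -1 then (1 : ℝ) else 0) := by
    intro x
    by_cases hx : f.eval x = 0
    · simp [hx]
    · have hp := quadraticChar_eq_pow_of_char_ne_two' hchar (f.eval x)
      have hc2 : Fintype.card F / 2 = c := by omega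
      rw [hc2] at hp
      rcases quadraticChar_dichotomy hx with h1 | h1
      · rw [h1] at hp ⊢
        simp only [Int.cast_one] at hp
        simp [hx, ← hp, hne]
      · rw [h1] at hp ⊢
        simp only [Int.cast_neg, Int.cast_one] at hp
        simp [hx, ← hp, hne.symm]
  have hone : ∀ x : F, (1 : ℝ) =
      (if f.eval x ≠ 0 ∧ f.eval x ^ c = 1 then (1 : ℝ) else 0) +
      (if f.eval x ≠ 0 ∧ f.eval x ^ c = -1 then (1 : ℝ) else 0) +
      (if f.eval x = 0 then (1 : ℝ) else 0) := by
    intro x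
    by_cases hx : f.eval x = 0
    · simp [hx]
    · have hp := quadraticChar_eq_pow_of_char_ne_two' hchar (f.eval x)
      have hc2 : Fintype.card F / 2 = c := by omega
      rw [hc2] at hp
      rcases quadraticChar_dichotomy hx with h1 | h1
      · rw [h1] at hp
        simp only [Int.cast_one] at hp
        simp [hx, ← hp, hne]
      · rw [h1] at hp
        simp only [Int.cast_neg, Int.cast_one] at hp
        simp [hx, ← hp, hne.symm]
  have hsum : ∑ x : F, ((quadraticChar F (f.eval x) : ℤ) : ℝ) = (N1.card : ℝ) - N2.card := by
    rw [Finset.sum_congr rfl fun x _ => hval x, Finset.sum_sub_distrib,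
      Finset.sum_boole, Finset.sum_boole]
  have htot : (q : ℝ) = (N1.card : ℝ) + N2.card + N0.card := by
    have h1 : (q : ℝ) = ∑ x : F, (1 : ℝ) := by simp [hqd]
    rw [h1, Finset.sum_congr rfl fun x _ => hone x, Finset.sum_add_distrib,
      Finset.sum_add_distrib, Finset.sum_boole, Finset.sum_boole, Finset.sum_boole]
  have c1 : (2 * (h : ℝ)) * N1.card ≤ D + m * c + (h + 1) * q := by exact_mod_cast hcount 1
  have c2 : (2 * (h : ℝ)) * N2.card ≤ D + m * c + (h + 1) * q := by
    have := hcount (-1)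
    have h2 : 2 * h * N2.card ≤ D + m * c + (h + 1) * q := this
    exact_mod_cast h2
  have hD' : 2 * (D : ℝ) ≤ q := by
    have : 2 * D ≤ q := by omega
    exact_mod_cast this
  have hc' : (q : ℝ) = 2 * c + 1 := by exact_mod_cast hc
  have hN0' : (N0.card : ℝ) ≤ m := by exact_mod_cast hN0
  have hhp : (0 : ℝ) < h := by exact_mod_cast hh
  have hmp : (0 : ℝ) ≤ m := by positivity
  have hq1 : (1 : ℝ) ≤ q := by rw [hc']; have : (0 : ℝ) ≤ c := by positivity
                               linarith
  have e1 : (m : ℝ) * c ≤ m * q / 2 := by rw [hc']; nlinarith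
  have e2 : 2 * (h : ℝ) * N0.card ≤ 2 * h * m := by nlinarith
  have e3 : 2 * (h : ℝ) * N1.card + 2 * h * N2.card + 2 * h * N0.card = 2 * h * q := by
    rw [htot]; ring
  have hfin : |2 * (h : ℝ) * ((N1.card : ℝ) - N2.card)| ≤ ((m : ℝ) + 3) * q + 2 * h * m := by
    rw [abs_le]
    constructor <;> nlinarith
  rw [abs_mul, abs_of_pos (show (0 : ℝ) < 2 * h by positivity)] at hfin
  rw [hsum]
  exact hfin

/-- weak Weil bound -/
lemma weil_weak (m : ℕ) (ε : ℝ) (hε : 0 < ε) : ∃ N : ℕ, ∀ (F : Type) [Field F] [Fintype F],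
    Fintype.card F % 2 = 1 → N < Fintype.card F → ∀ f : F[X], f.natDegree ≤ m → f.Separable →
    0 < f.natDegree →
    |∑ x : F, ((quadraticChar F (f.eval x) : ℤ) : ℝ)| ≤ ε * Fintype.card F := by
  obtain ⟨h, hh⟩ := exists_nat_gt (((m : ℝ) + 3) / ε)
  have hpos : (0 : ℝ) < ((m : ℝ) + 3) / ε := by positivity
  have hh0 : (0 : ℝ) < h := hpos.trans hh
  have hh0' : 0 < h := by exact_mod_cast hh0
  rw [div_lt_iff₀ hε] at hh
  obtain ⟨N1, hN1⟩ := exists_nat_gt (2 * (m : ℝ) / ε)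
  rw [div_lt_iff₀ hε] at hN1
  refine ⟨2 * (h * (h + 2 + 2 * h * m)) + m + 4 * h + 6 + N1, ?_⟩
  intro F _ _ hodd hN f hm hsep hdeg
  have hf0 : f ≠ 0 := by rintro rfl; simp at hdeg
  have hx0 : ∃ x0 : F, f.eval x0 ≠ 0 := by
    by_contra hcon
    push Not at hcon
    have : Finset.univ ⊆ f.roots.toFinset := by
      intro x _
      simp [hf0, hcon x]
    have h2 := (Finset.card_le_card this).trans ((Multiset.toFinset_card_le _).trans
      ((card_roots' f).trans hm))
    rw [Finset.card_univ] at h2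
    omega
  obtain ⟨x0, hx0⟩ := hx0
  have hsep' : (taylor x0 f).Separable := by
    have h1 := IsCoprime.map hsep (taylorAlgHom x0 : F[X] →ₐ[F] F[X]).toRingHom
    have h2 : derivative (taylor x0 f) = taylor x0 (derivative f) := by
      simp [taylor_apply, derivative_comp]
    rw [Polynomial.Separable, h2]
    exact h1
  have key := weil_weak0 m h hh0' F hodd (by omega) (taylor x0 f) (by rwa [natDegree_taylor])
    hsep'.squarefree (by rwa [natDegree_taylor]) (by simpa [taylor_eval] using hx0)
  have hsum : ∑ x : F, ((quadraticChar F ((taylor x0 f).eval x) : ℤ) : ℝ) =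
      ∑ x : F, ((quadraticChar F (f.eval x) : ℤ) : ℝ) := by
    refine Fintype.sum_equiv (Equiv.addRight x0) _ _ fun x => ?_
    rw [taylor_eval]; rfl
  rw [hsum] at key
  have hq : (N1 : ℝ) ≤ Fintype.card F := by
    have : N1 ≤ Fintype.card F := by omega
    exact_mod_cast this
  have hq0 : (0 : ℝ) < Fintype.card F := by
    have : 0 < Fintype.card F := by omega
    exact_mod_cast this
  have h3 : 2 * (m : ℝ) ≤ Fintype.card F * ε := by nlinarith
  have h4 : ((m : ℝ) + 3) * Fintype.card F + 2 * h * m ≤ 2 * h * (ε * Fintype.card F) := by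
    nlinarith
  exact le_of_mul_le_mul_left (key.trans h4) (by positivity)

end WeilWeak

section ListPoly
open Polynomial

/-- integer coefficient lists as polynomials: evaluation -/
def lev {F : Type*} [Field F] (x : F) : List ℤ → F
  | [] => 0
  | c :: l => (c : F) + x * lev x l

/-- addition of coefficient lists -/
def ladd : List ℤ → List ℤ → List ℤ
  | [], l => l
  | c :: l, [] => c :: l
  | c :: l, d :: l' => (c + d) :: ladd l l'

/-- scalar multiplication of coefficient lists -/
def lsmul (k : ℤ) : List ℤ → List ℤ
  | [] => []
  | c :: l => (k * c) :: lsmul k l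

/-- multiplication of coefficient lists -/
def lmul : List ℤ → List ℤ → List ℤ
  | [], _ => []
  | c :: l, l' => ladd (lsmul c l') (0 :: lmul l l')

/-- subtraction of coefficient lists -/
def lsub (l l' : List ℤ) : List ℤ := ladd l (lsmul (-1) l')

variable {F : Type*} [Field F]

lemma lev_ladd (x : F) : ∀ l l' : List ℤ, lev x (ladd l l') = lev x l + lev x l'
  | [], l => by simp [ladd, lev]
  | c :: l, [] => by simp [ladd, lev]
  | c :: l, d :: l' => by simp [ladd, lev, lev_ladd x l l']; ring

lemma lev_lsmul (x : F) (k : ℤ) : ∀ l : List ℤ, lev x (lsmul k l) = k * lev x l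
  | [] => by simp [lsmul, lev]
  | c :: l => by simp [lsmul, lev, lev_lsmul x k l]; ring

lemma lev_lmul (x : F) : ∀ l l' : List ℤ, lev x (lmul l l') = lev x l * lev x l'
  | [], l => by simp [lmul, lev]
  | c :: l, l' => by simp [lmul, lev, lev_ladd, lev_lsmul, lev_lmul x l l']; ring

lemma lev_lsub (x : F) (l l' : List ℤ) : lev x (lsub l l') = lev x l - lev x l' := by
  simp [lsub, lev_ladd, lev_lsmul]; ring

/-- the polynomial of a coefficient list -/
def lpol (F : Type*) [Field F] : List ℤ → F[X]
  | [] => 0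
  | c :: l => C (c : F) + X * lpol F l

lemma lpol_eval (x : F) : ∀ l, (lpol F l).eval x = lev x l
  | [] => by simp [lpol, lev]
  | c :: l => by simp [lpol, lev, lpol_eval x l]

lemma lpol_natDegree : ∀ l, (lpol F l).natDegree ≤ l.length
  | [] => by simp [lpol]
  | c :: l => by
    rw [lpol]
    refine (natDegree_add_le _ _).trans (max_le (by simp) ?_)
    refine natDegree_mul_le.trans ?_
    have := lpol_natDegree l
    simp only [natDegree_X, List.length_cons]; omega

lemma lpol_ne_zero : ∀ l, (∃ c : ℤ, c ∈ l ∧ (c : F) ≠ 0) → lpol F l ≠ 0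
  | [], h => by simp at h
  | c :: l, h => by
    intro h0
    have h1 : lpol F l = 0 := by
      ext n
      have := congrArg (fun p => coeff p (n + 1)) h0
      simpa only [lpol, coeff_add, coeff_C_succ, coeff_X_mul, coeff_zero, zero_add] using this
    have h2 : (c : F) = 0 := by
      have := congrArg (fun p => coeff p 0) h0
      simpa [lpol] using this
    obtain ⟨d, hd, hd0⟩ := h
    rcases List.mem_cons.mp hd with rfl | hd
    · exact hd0 h2
    · exact lpol_ne_zero l ⟨d, hd, hd0⟩ h1

/-- some coefficient is a power of two up to sign -/
def lgood (l : List ℤ) : Bool := l.any fun c => c ∈ ([1, -1, 2, -2, 4, -4, 8, -8] : List ℤ)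

lemma lroots_card [Fintype F] (h2 : (2 : F) ≠ 0) (l : List ℤ) (hl : lgood l = true)
    (hlen : l.length ≤ 6) :
    (Finset.univ.filter fun x : F => lev x l = 0).card ≤ 6 := by
  have hne : lpol F l ≠ 0 := by
    apply lpol_ne_zero
    rw [lgood, List.any_eq_true] at hl
    obtain ⟨c, hc, hc2⟩ := hl
    refine ⟨c, hc, ?_⟩
    have h4 : (4 : F) ≠ 0 := by
      have : (4 : F) = 2 * 2 := by norm_num
      rw [this]; exact mul_ne_zero h2 h2
    have h8 : (8 : F) ≠ 0 := by
      have : (8 : F) = 2 * 4 := by norm_num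
      rw [this]; exact mul_ne_zero h2 h4
    simp only [List.mem_cons, List.not_mem_nil, or_false, decide_eq_true_eq] at hc2
    rcases hc2 with rfl | rfl | rfl | rfl | rfl | rfl | rfl | rfl <;> simp [h2, h4, h8]
  have : (Finset.univ.filter fun x : F => lev x l = 0) ⊆ (lpol F l).roots.toFinset := by
    intro x hx
    have := (Finset.mem_filter.mp hx).2
    simp [hne, lpol_eval, this]
  exact (Finset.card_le_card this).trans ((Multiset.toFinset_card_le _).trans
      ((card_roots' _).trans ((lpol_natDegree l).trans hlen)))

/-- The polynomials in `b`, as triples of coefficient lists in `a`; the last four are quadratic. -/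
def dat : ℕ → List ℤ × List ℤ × List ℤ
  | 2 => ([], [1], [])
  | 3 => ([], [-1], [1])
  | 4 => ([], [1], [0, -2, 1])
  | 5 => ([], [1, -1, 1], [0, -1])
  | 6 => ([], [1, -1, 1], [0, 0, -1])
  | 7 => ([], [-1], [0, 0, 1])
  | 8 => ([], [-1, 1], [0, 1])
  | 9 => ([], [-2, 1], [1])
  | 10 => ([], [1, 1], [0, -1])
  | 11 => ([], [0, 1], [1, -2])
  | 12 => ([1], [-2], [0, 1])
  | 13 => ([0, 1], [-1, -1], [0, 1])
  | 14 => ([-1, 1], [0, -1], [0, 1])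
  | 15 => ([1], [0], [0, -1])
  | _ => ([], [], [])

/-- resultants and discriminants -/
def resl (i j : ℕ) : List ℤ :=
  let A := (dat i).1
  let B := (dat i).2.1
  let G := (dat i).2.2
  let a := (dat j).1
  let b := (dat j).2.1
  let g := (dat j).2.2
  if i = j then
    (if i < 12 then B else lmul A (lsub (lmul [4] (lmul A G)) (lmul B B)))
  else if j < 12 then lsub (lmul B g) (lmul b G)
  else if i < 12 then ladd (lsub (lmul g (lmul B B)) (lmul b (lmul B G))) (lmul a (lmul G G))
  else lsub (lmul (lsub (lmul A g) (lmul a G)) (lsub (lmul A g) (lmul a G)))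
    (lmul (lsub (lmul A b) (lmul a B)) (lsub (lmul B g) (lmul b G)))

lemma resl_good : ∀ i < 16, ∀ j < 16, 2 ≤ i → i ≤ j →
    lgood (resl i j) = true ∧ (resl i j).length ≤ 6 := by
  decide +kernel

lemma dat_lin : ∀ i < 12, (dat i).1 = [] := by decide

/-- the `i`-th polynomial in `b` -/
def bpol (i : ℕ) (a : F) : F[X] :=
  C (lev a (dat i).1) * X ^ 2 + C (lev a (dat i).2.1) * X + C (lev a (dat i).2.2)

lemma coprime_of {f g u v : F[X]} {r : F} (hr : r ≠ 0) (h : u * f + v * g = C r) :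
    IsCoprime f g := by
  refine ⟨C r⁻¹ * u, C r⁻¹ * v, ?_⟩
  have : C r⁻¹ * u * f + C r⁻¹ * v * g = C r⁻¹ * (u * f + v * g) := by ring
  rw [this, h, ← C_mul, inv_mul_cancel₀ hr, C_1]

/-- parameters that are not exceptional -/
def ngood (a : F) : Prop := ∀ i < 16, ∀ j < 16, 2 ≤ i → i ≤ j → lev a (resl i j) ≠ 0

lemma bpol_coprime_lt (a : F) (ha : ngood a) (i j : ℕ) (hj : j < 16) (hi : 2 ≤ i) (hij : i < j) :
    IsCoprime (bpol i a) (bpol j a) := by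
  have hr := ha i (by omega) j hj hi hij.le
  have hii := ha i (by omega) i (by omega) hi le_rfl
  unfold resl at hr hii
  simp only [hij.ne, if_false, if_true] at hr hii
  by_cases h1 : j < 12
  · rw [if_pos h1] at hr
    rw [lev_lsub, lev_lmul, lev_lmul] at hr
    unfold bpol
    rw [dat_lin i (by omega), dat_lin j h1]
    simp only [lev, C_0, zero_mul, zero_add]
    refine coprime_of (u := -C (lev a (dat j).2.1)) (v := C (lev a (dat i).2.1)) hr ?_
    simp only [C_sub, C_mul]; ring
  rw [if_neg h1] at hr
  by_cases h2 : i < 12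
  · rw [if_pos h2] at hr
    simp only [lev_ladd, lev_lsub, lev_lmul] at hr
    unfold bpol
    rw [dat_lin i h2]
    simp only [lev, C_0, zero_mul, zero_add]
    generalize lev a (dat i).2.1 = u at *
    generalize lev a (dat i).2.2 = v at *
    generalize lev a (dat j).1 = A at *
    generalize lev a (dat j).2.1 = B at *
    generalize lev a (dat j).2.2 = G at *
    refine coprime_of (u := -(C A * C u * X + C B * C u - C A * C v)) (v := C u ^ 2) hr ?_
    simp only [C_sub, C_add, C_mul]; ring
  · rw [if_neg h2] at hr hii
    simp only [lev_ladd, lev_lsub, lev_lmul] at hr hii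
    have hA := left_ne_zero_of_mul hii
    unfold bpol
    generalize lev a (dat i).1 = A at *
    generalize lev a (dat i).2.1 = B at *
    generalize lev a (dat i).2.2 = G at *
    generalize lev a (dat j).1 = A' at *
    generalize lev a (dat j).2.1 = B' at *
    generalize lev a (dat j).2.2 = G' at *
    refine coprime_of (u := (C A * C B' - C A' * C B) ^ 2 + (C A * (C A * C B' - C A' * C B) * X +
      C B * (C A * C B' - C A' * C B) - C A * (C A * C G' - C A' * C G)) * C A')
      (v := - (C A * (C A * C B' - C A' * C B) * X +
      C B * (C A * C B' - C A' * C B) - C A * (C A * C G' - C A' * C G)) * C A)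
      (mul_ne_zero hA hr) ?_
    simp only [C_sub, C_add, C_mul]; ring

lemma bpol_coprime (a : F) (ha : ngood a) (i j : ℕ) (hi : 2 ≤ i) (hi2 : i < 16) (hj : 2 ≤ j)
    (hj2 : j < 16) (hij : i ≠ j) : IsCoprime (bpol i a) (bpol j a) := by
  rcases lt_or_gt_of_ne hij with h | h
  · exact bpol_coprime_lt a ha i j hj2 hi h
  · exact (bpol_coprime_lt a ha j i hi2 hj h).symm

lemma bpol_sep (a : F) (ha : ngood a) (i : ℕ) (hi : 2 ≤ i) (hi2 : i < 16) :
    (bpol i a).Separable ∧ 0 < (bpol i a).natDegree ∧ (bpol i a).natDegree ≤ 2 := by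
  have hii := ha i (by omega) i (by omega) hi le_rfl
  unfold resl at hii
  simp only [if_true] at hii
  by_cases h2 : i < 12
  · rw [if_pos h2] at hii
    unfold bpol
    rw [dat_lin i h2]
    simp only [lev, C_0, zero_mul, zero_add]
    rw [natDegree_linear hii]
    refine ⟨?_, by norm_num, by norm_num⟩
    rw [Polynomial.Separable]
    refine coprime_of (u := 0) (v := 1) hii ?_
    simp
  · rw [if_neg h2] at hii
    simp only [lev_ladd, lev_lsub, lev_lmul] at hii
    have hA := left_ne_zero_of_mul hii
    have hd := right_ne_zero_of_mul hii
    unfold bpol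
    rw [natDegree_quadratic hA]
    refine ⟨?_, by norm_num, by norm_num⟩
    rw [Polynomial.Separable]
    generalize lev a (dat i).1 = A at *
    generalize lev a (dat i).2.1 = B at *
    generalize lev a (dat i).2.2 = G at *
    refine coprime_of (u := 4 * C A) (v := - (2 * C A * X + C B)) hd ?_
    have hd : derivative (C A * X ^ 2 + C B * X + C G) = 2 * C A * X + C B := by
      simp; ring
    rw [hd]
    have h4 : (C (4 : F) : F[X]) = 4 := map_ofNat C 4
    simp only [lev, C_sub, C_mul, mul_zero, add_zero, Int.cast_ofNat, h4]
    ring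

lemma bad_card [Fintype F] (h2 : (2 : F) ≠ 0) :
    (Finset.univ.filter fun a : F => ¬ ngood a).card ≤ 1536 := by
  have hsub : (Finset.univ.filter fun a : F => ¬ ngood a) ⊆
      (Finset.range 16 ×ˢ Finset.range 16).biUnion fun ij =>
        if 2 ≤ ij.1 ∧ ij.1 ≤ ij.2 then Finset.univ.filter fun a : F => lev a (resl ij.1 ij.2) = 0
        else ∅ := by
    intro a ha
    have ha := (Finset.mem_filter.mp ha).2
    unfold ngood at ha
    push Not at ha
    obtain ⟨i, hi, j, hj, h3, h4, h5⟩ := ha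
    rw [Finset.mem_biUnion]
    refine ⟨(i, j), by simp [hi, hj], ?_⟩
    simp [h3, h4, h5]
  refine (Finset.card_le_card hsub).trans (Finset.card_biUnion_le.trans ?_)
  refine (Finset.sum_le_card_nsmul _ _ 6 ?_).trans (by simp)
  rintro ⟨i, j⟩ hij
  simp only [Finset.mem_product, Finset.mem_range] at hij
  split_ifs with h
  · obtain ⟨g1, g2⟩ := resl_good i hij.1 j hij.2 h.1 h.2
    exact lroots_card h2 _ g1 g2
  · simp

end ListPoly

section Equi
open Polynomial

/-- the sixteen polynomial values -/
def pv {F : Type*} [Field F] (i : Fin 16) (a b : F) : F :=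
  if i = 0 then a else if i = 1 then 1 - a else (bpol i a).eval b

/-- the real quadratic character -/
def rchi {F : Type*} [Field F] [Fintype F] (x : F) : ℝ := ((quadraticChar F x : ℤ) : ℝ)

lemma rchi_mul {F : Type*} [Field F] [Fintype F] (x y : F) : rchi (x * y) = rchi x * rchi y := by
  rw [rchi, map_mul, Int.cast_mul]; rfl

lemma rchi_prod {F : Type*} [Field F] [Fintype F] {ι : Type*} (s : Finset ι) (f : ι → F) :
    rchi (∏ i ∈ s, f i) = ∏ i ∈ s, rchi (f i) := by
  simp [rchi, map_prod]

lemma rchi_cases {F : Type*} [Field F] [Fintype F] {x : F} (hx : x ≠ 0) :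
    rchi x = 1 ∨ rchi x = -1 := by
  rcases quadraticChar_dichotomy hx with h | h <;> simp [rchi, h]

lemma rchi_zero {F : Type*} [Field F] [Fintype F] : rchi (0 : F) = 0 := by
  simp [rchi]

lemma rchi_abs {F : Type*} [Field F] [Fintype F] (x : F) : |rchi x| ≤ 1 := by
  by_cases hx : x = 0
  · simp [hx, rchi_zero]
  · rcases rchi_cases hx with h | h <;> simp [h]

lemma prod_poly_facts {F : Type*} [Field F] {ι : Type*} (s : Finset ι) (hs : s.Nonempty)
    (f : ι → F[X]) (hc : ∀ i ∈ s, ∀ j ∈ s, i ≠ j → IsCoprime (f i) (f j))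
    (h : ∀ i ∈ s, (f i).Separable ∧ 0 < (f i).natDegree ∧ (f i).natDegree ≤ 2) :
    (∏ i ∈ s, f i).Separable ∧ 0 < (∏ i ∈ s, f i).natDegree ∧
      (∏ i ∈ s, f i).natDegree ≤ 2 * s.card := by
  refine ⟨separable_prod' hc fun i hi => (h i hi).1, ?_, ?_⟩
  · rw [natDegree_prod _ _ fun i hi => (h i hi).1.ne_zero]
    obtain ⟨i, hi⟩ := hs
    exact lt_of_lt_of_le (h i hi).2.1 (Finset.single_le_sum (f := fun i => (f i).natDegree)
      (fun _ _ => Nat.zero_le _) hi)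
  · refine (natDegree_prod_le _ _).trans ?_
    rw [mul_comm]
    exact Finset.sum_le_card_nsmul _ _ 2 fun i hi => (h i hi).2.2

/-- the character sum over a nonempty set of the polynomials is small -/
lemma charsum_small (ε : ℝ) (hε : 0 < ε) : ∃ N : ℕ, ∀ (F : Type) [Field F] [Fintype F],
    Fintype.card F % 2 = 1 → N < Fintype.card F → ∀ S : Finset (Fin 16), S.Nonempty →
    |∑ a : F, ∑ b : F, ∏ i ∈ S, rchi (pv i a b)| ≤
      ε * (Fintype.card F : ℝ) ^ 2 + 1536 * Fintype.card F := by
  obtain ⟨N, hN⟩ := weil_weak 32 ε hε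
  refine ⟨N, ?_⟩
  intro F _ _ hodd hF S hS
  have h2 : (2 : F) ≠ 0 := by
    apply Ring.two_ne_zero
    intro h2
    have := FiniteField.even_card_of_char_two h2
    omega
  have hq0 : (0 : ℝ) < Fintype.card F := by
    have : 0 < Fintype.card F := by omega
    exact_mod_cast this
  set q := Fintype.card F with hqd
  have hcard : ∀ T : Finset (Fin 16), 2 * T.card ≤ 32 := by
    intro T
    have := Finset.card_le_univ T
    simp at this
    omega
  set S0 := S.filter fun i => i.1 < 2 with hS0
  set S1 := S.filter fun i => ¬ i.1 < 2 with hS1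
  let f0 : Fin 16 → F[X] := fun i => if i = 0 then X else 1 - X
  have hpv0 : ∀ i ∈ S0, ∀ a b : F, pv i a b = (f0 i).eval a := by
    intro i hi a b
    have hi := (Finset.mem_filter.mp hi).2
    have : i = 0 ∨ i = 1 := by
      rcases i with ⟨i, hi'⟩
      simp only at hi
      interval_cases i <;> simp
    rcases this with rfl | rfl <;> simp [pv, f0]
  have hpv1 : ∀ i ∈ S1, ∀ a b : F, pv i a b = (bpol i a).eval b := by
    intro i hi a b
    have hi := (Finset.mem_filter.mp hi).2
    have h0 : i ≠ 0 := by rintro rfl; simp at hi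
    have h1 : i ≠ 1 := by rintro rfl; simp at hi
    simp [pv, h0, h1]
  have hsplit : ∀ a b : F, ∏ i ∈ S, rchi (pv i a b) =
      rchi ((∏ i ∈ S0, f0 i).eval a) * rchi ((∏ i ∈ S1, bpol i a).eval b) := by
    intro a b
    rw [← Finset.prod_filter_mul_prod_filter_not S (fun i => i.1 < 2), eval_prod, eval_prod,
      rchi_prod, rchi_prod]
    congr 1
    · exact Finset.prod_congr rfl fun i hi => by rw [hpv0 i hi]
    · exact Finset.prod_congr rfl fun i hi => by rw [hpv1 i hi]
  simp_rw [hsplit, ← Finset.mul_sum]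
  rcases S1.eq_empty_or_nonempty with hem | hne
  · have hne0 : S0.Nonempty := by
      obtain ⟨i, hi⟩ := hS
      by_cases h : i.1 < 2
      · exact ⟨i, Finset.mem_filter.mpr ⟨hi, h⟩⟩
      · have : i ∈ S1 := Finset.mem_filter.mpr ⟨hi, h⟩
        rw [hem] at this; simp at this
    have hX1 : (1 - X : F[X]) = C (-1) * X + C 1 := by simp; ring
    obtain ⟨p1, p2, p3⟩ := prod_poly_facts S0 hne0 f0 (by
      intro i hi j hj hij
      have hi := (Finset.mem_filter.mp hi).2
      have hj := (Finset.mem_filter.mp hj).2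
      have hcop : IsCoprime (X : F[X]) (1 - X) := ⟨1, 1, by ring⟩
      have hij' : i.1 ≠ j.1 := fun h => hij (Fin.ext h)
      by_cases h : i = 0
      · have : j ≠ 0 := fun h' => hij (h.trans h'.symm)
        simp only [f0, h, this, if_true, if_false]; exact hcop
      · have h1 : i.1 ≠ 0 := fun h' => h (Fin.ext h')
        have : j = 0 := Fin.ext (by simp; omega)
        simp only [f0, h, this, if_true, if_false]; exact hcop.symm) (by
      intro i hi
      by_cases h : i = 0
      · simp only [f0, h, if_true]
        exact ⟨separable_X, by simp, by simp⟩
      · simp only [f0, h, if_false]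
        have hd : (1 - X : F[X]).natDegree = 1 := by
          rw [hX1, natDegree_linear (by simp)]
        refine ⟨?_, by omega, by omega⟩
        rw [Polynomial.Separable]
        refine ⟨0, -1, ?_⟩
        simp)
    have hw := hN F hodd hF _ (p3.trans (hcard _)) p1 p2
    rw [hem]
    simp only [Finset.prod_empty, eval_one]
    have h1 : rchi (1 : F) = 1 := by simp [rchi]
    rw [h1, Finset.sum_const, Finset.card_univ, ← Finset.sum_mul, abs_mul]
    have e1 : |∑ a : F, rchi ((∏ i ∈ S0, f0 i).eval a)| ≤ ε * q := hw
    have e2 : |Fintype.card F • (1 : ℝ)| = q := by simp [hqd]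
    rw [e2]
    nlinarith
  · have hb : ∀ a : F, |rchi ((∏ i ∈ S0, f0 i).eval a) *
        ∑ b : F, rchi ((∏ i ∈ S1, bpol i a).eval b)| ≤ ε * q + if ¬ ngood a then (q : ℝ) else 0 := by
      intro a
      rw [abs_mul]
      by_cases ha : ngood a
      · obtain ⟨p1, p2, p3⟩ := prod_poly_facts S1 hne (fun i => bpol i a) (by
          intro i hi j hj hij
          have hi := (Finset.mem_filter.mp hi).2
          have hj := (Finset.mem_filter.mp hj).2
          exact bpol_coprime a ha i j (by omega) i.2 (by omega) j.2 fun h => hij (Fin.ext h)) (by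
          intro i hi
          have hi := (Finset.mem_filter.mp hi).2
          exact bpol_sep a ha i (by omega) i.2)
        have hw : |∑ b : F, rchi ((∏ i ∈ S1, bpol i a).eval b)| ≤ ε * q :=
          hN F hodd hF _ (p3.trans (hcard _)) p1 p2
        have h1 := rchi_abs ((∏ i ∈ S0, f0 i).eval a)
        simp only [ha, not_true, if_false, add_zero]
        calc _ ≤ 1 * (ε * q) := mul_le_mul h1 hw (abs_nonneg _) zero_le_one
          _ = _ := one_mul _
      · have hw : |∑ b : F, rchi ((∏ i ∈ S1, bpol i a).eval b)| ≤ q := by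
          refine (Finset.abs_sum_le_sum_abs _ _).trans ?_
          refine (Finset.sum_le_card_nsmul _ _ 1 fun b _ => rchi_abs _).trans ?_
          simp [hqd]
        have h1 := rchi_abs ((∏ i ∈ S0, f0 i).eval a)
        simp only [ha, not_false_iff, if_true]
        have : (0 : ℝ) ≤ ε * q := by positivity
        calc _ ≤ 1 * (q : ℝ) := mul_le_mul h1 hw (abs_nonneg _) zero_le_one
          _ ≤ _ := by linarith
    refine (Finset.abs_sum_le_sum_abs _ _).trans ((Finset.sum_le_sum fun a _ => hb a).trans ?_)
    rw [Finset.sum_add_distrib, Finset.sum_const, Finset.card_univ, ← Finset.sum_filter,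
      Finset.sum_const, nsmul_eq_mul, nsmul_eq_mul]
    have h3 : ((Finset.univ.filter fun a : F => ¬ ngood a).card : ℝ) ≤ 1536 := by
      exact_mod_cast bad_card h2
    nlinarith

/-- pairs where some polynomial vanishes -/
def zset (F : Type*) [Field F] [Fintype F] : Finset (F × F) :=
  Finset.univ.filter fun p => ∃ i, pv i p.1 p.2 = 0

lemma zset_card (F : Type*) [Field F] [Fintype F] (h2 : (2 : F) ≠ 0) :
    (zset F).card ≤ 1570 * Fintype.card F := by
  set q := Fintype.card F with hq
  have hsub : zset F ⊆ ((Finset.univ.filter fun a : F => ¬ ngood a) ∪ {0, 1}) ×ˢ Finset.univ ∪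
      Finset.univ.biUnion fun i : Fin 16 => ((Finset.univ.filter fun a : F => ngood a).biUnion
        fun a => if 2 ≤ i.1 then (bpol i a).roots.toFinset.image fun b => (a, b) else ∅) := by
    rintro ⟨a, b⟩ hab
    obtain ⟨i, hi⟩ := (Finset.mem_filter.mp hab).2
    simp only at hi
    rw [Finset.mem_union]
    by_cases hex : ngood a ∧ a ≠ 0 ∧ a ≠ 1
    · right
      rw [Finset.mem_biUnion]
      refine ⟨i, Finset.mem_univ _, ?_⟩
      rw [Finset.mem_biUnion]
      refine ⟨a, by simp [hex.1], ?_⟩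
      have hi0 : i ≠ 0 := by rintro rfl; exact hex.2.1 (by simpa [pv] using hi)
      have hi1 : i ≠ 1 := by
        rintro rfl
        apply hex.2.2
        have : 1 - a = 0 := by simpa [pv] using hi
        exact (sub_eq_zero.mp this).symm
      have hi2 : 2 ≤ i.1 := by
        have h0 : i.1 ≠ 0 := fun h => hi0 (Fin.ext h)
        have h1 : i.1 ≠ 1 := fun h => hi1 (Fin.ext h)
        omega
      rw [if_pos hi2, Finset.mem_image]
      refine ⟨b, ?_, rfl⟩
      have hz : (bpol i a).eval b = 0 := by simpa [pv, hi0, hi1] using hi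
      have hne := (bpol_sep a hex.1 i hi2 i.2).1.ne_zero
      simp [hne, hz]
    · left
      simp only [Finset.mem_product, Finset.mem_univ, and_true, Finset.mem_union,
        Finset.mem_filter, true_and, Finset.mem_insert, Finset.mem_singleton]
      tauto
  refine (Finset.card_le_card hsub).trans ((Finset.card_union_le _ _).trans ?_)
  have h1 : (((Finset.univ.filter fun a : F => ¬ ngood a) ∪ {0, 1}) ×ˢ
      (Finset.univ : Finset F)).card ≤ 1538 * q := by
    rw [Finset.card_product, Finset.card_univ]
    apply Nat.mul_le_mul_right
    refine (Finset.card_union_le _ _).trans ?_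
    have := bad_card h2
    have h3 := Finset.card_le_two (a := (0 : F)) (b := 1)
    omega
  have h3 : (Finset.univ.biUnion fun i : Fin 16 => ((Finset.univ.filter fun a : F => ngood a).biUnion
        fun a => if 2 ≤ i.1 then (bpol i a).roots.toFinset.image fun b => (a, b) else ∅)).card ≤
        32 * q := by
    refine Finset.card_biUnion_le.trans ?_
    refine (Finset.sum_le_card_nsmul _ _ (2 * q) fun i _ => ?_).trans (by simp; omega)
    refine Finset.card_biUnion_le.trans ?_
    refine (Finset.sum_le_card_nsmul _ _ 2 fun a ha => ?_).trans ?_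
    · split_ifs with hi
      · refine Finset.card_image_le.trans ((Multiset.toFinset_card_le _).trans
          ((card_roots' _).trans ?_))
        exact (bpol_sep a (Finset.mem_filter.mp ha).2 i hi i.2).2.2
      · simp
    · rw [smul_eq_mul, mul_comm]
      exact Nat.mul_le_mul_left _ (Finset.card_le_univ _)
  omega

/-- sign of a boolean -/
def sg (t : Bool) : ℝ := if t then 1 else -1

/-- pairs with prescribed sign pattern -/
def cset (F : Type*) [Field F] [Fintype F] (t : Fin 16 → Bool) : Finset (F × F) :=
  Finset.univ.filter fun p => ∀ i, rchi (pv i p.1 p.2) = sg (t i)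

lemma equi (ε : ℝ) (hε : 0 < ε) : ∃ N : ℕ, ∀ (F : Type) [Field F] [Fintype F],
    Fintype.card F % 2 = 1 → N < Fintype.card F → ∀ t : Fin 16 → Bool,
    |((cset F t).card : ℝ) - (Fintype.card F : ℝ) ^ 2 / 2 ^ 16| ≤
      ε * (Fintype.card F : ℝ) ^ 2 + 3106 * Fintype.card F := by
  obtain ⟨N, hN⟩ := charsum_small ε hε
  refine ⟨N, ?_⟩
  intro F _ _ hodd hF t
  have h2 : (2 : F) ≠ 0 := by
    apply Ring.two_ne_zero
    intro h2
    have := FiniteField.even_card_of_char_two h2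
    omega
  have hN' := hN F hodd hF
  set q := Fintype.card F with hqd
  have hsg : ∀ b, |sg b| = 1 := by intro b; cases b <;> simp [sg]
  -- the smooth count
  set M : ℝ := ∑ p : F × F, ∏ i : Fin 16, ((1 + sg (t i) * rchi (pv i p.1 p.2)) / 2) with hM
  have hM1 : |M - (q : ℝ) ^ 2 / 2 ^ 16| ≤ ε * (q : ℝ) ^ 2 + 1536 * q := by
    have hexp : M = (1 / 2 ^ 16) * ∑ S : Finset (Fin 16), (∏ i ∈ S, sg (t i)) *
        ∑ a : F, ∑ b : F, ∏ i ∈ S, rchi (pv i a b) := by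
      rw [hM]
      have : ∀ p : F × F, ∏ i : Fin 16, ((1 + sg (t i) * rchi (pv i p.1 p.2)) / 2) =
          (1 / 2 ^ 16) * ∑ S : Finset (Fin 16), (∏ i ∈ S, sg (t i)) *
            ∏ i ∈ S, rchi (pv i p.1 p.2) := by
        intro p
        rw [Finset.prod_div_distrib, Finset.prod_one_add, Finset.powerset_univ]
        simp_rw [Finset.prod_mul_distrib]
        simp only [Finset.prod_const, Finset.card_univ, Fintype.card_fin]
        ring
      simp_rw [this]
      rw [← Finset.mul_sum, Finset.sum_comm]
      congr 1
      refine Finset.sum_congr rfl fun S _ => ?_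
      rw [← Finset.mul_sum, Fintype.sum_prod_type]
    rw [hexp, ← Finset.add_sum_erase _ _ (Finset.mem_univ ∅)]
    have he : (∏ i ∈ (∅ : Finset (Fin 16)), sg (t i)) *
        ∑ a : F, ∑ b : F, ∏ i ∈ (∅ : Finset (Fin 16)), rchi (pv i a b) = (q : ℝ) ^ 2 := by
      simp [hqd, sq]
    rw [he]
    set R := ∑ S ∈ Finset.univ.erase (∅ : Finset (Fin 16)), (∏ i ∈ S, sg (t i)) *
        ∑ a : F, ∑ b : F, ∏ i ∈ S, rchi (pv i a b) with hR
    have hRb : |R| ≤ 2 ^ 16 * (ε * (q : ℝ) ^ 2 + 1536 * q) := by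
      refine (Finset.abs_sum_le_sum_abs _ _).trans ?_
      refine (Finset.sum_le_card_nsmul _ _ (ε * (q : ℝ) ^ 2 + 1536 * q) fun S hS => ?_).trans ?_
      · rw [abs_mul, Finset.abs_prod]
        simp only [hsg, Finset.prod_const_one, one_mul]
        exact hN' S (Finset.nonempty_of_ne_empty (Finset.ne_of_mem_erase hS))
      · rw [nsmul_eq_mul]
        apply mul_le_mul_of_nonneg_right _ (by positivity)
        rw [Finset.card_erase_of_mem (Finset.mem_univ _)]
        simp only [Finset.card_univ, Fintype.card_finset, Fintype.card_fin]
        norm_num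
    have : (1 / 2 ^ 16 : ℝ) * ((q : ℝ) ^ 2 + R) - (q : ℝ) ^ 2 / 2 ^ 16 = R / 2 ^ 16 := by ring
    rw [this, abs_div, abs_of_pos (show (0 : ℝ) < 2 ^ 16 by positivity),
      div_le_iff₀ (by positivity)]
    linarith
  have hM2 : |((cset F t).card : ℝ) - M| ≤ 1570 * q := by
    have hc : ((cset F t).card : ℝ) = ∑ p : F × F,
        if ∀ i, rchi (pv i p.1 p.2) = sg (t i) then (1 : ℝ) else 0 := by
      rw [Finset.sum_boole]; rfl
    rw [hc, hM, ← Finset.sum_sub_distrib]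
    refine (Finset.abs_sum_le_sum_abs _ _).trans ?_
    have hb : ∀ p : F × F, |(if ∀ i, rchi (pv i p.1 p.2) = sg (t i) then (1 : ℝ) else 0) -
        ∏ i : Fin 16, ((1 + sg (t i) * rchi (pv i p.1 p.2)) / 2)| ≤
        if ∃ i, pv i p.1 p.2 = 0 then (1 : ℝ) else 0 := by
      intro p
      by_cases hz : ∃ i, pv i p.1 p.2 = 0
      · rw [if_pos hz, if_neg]
        · rw [zero_sub, abs_neg, Finset.abs_prod]
          refine Finset.prod_le_one (fun _ _ => abs_nonneg _) fun i _ => ?_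
          have h1 := abs_le.mp (rchi_abs (pv i p.1 p.2))
          rw [abs_le]
          cases t i <;> simp only [sg] <;> constructor <;> norm_num <;> linarith
        · intro hall
          obtain ⟨i, hi⟩ := hz
          have := hall i
          rw [hi, rchi_zero] at this
          cases h : t i <;> simp [sg, h] at this
      · rw [if_neg hz]
        push Not at hz
        by_cases hall : ∀ i, rchi (pv i p.1 p.2) = sg (t i)
        · rw [if_pos hall, Finset.prod_eq_one]
          · simp
          · intro i _
            rw [hall i]
            cases t i <;> simp [sg]
        · rw [if_neg hall]
          push Not at hall
          obtain ⟨i, hi⟩ := hall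
          rw [Finset.prod_eq_zero (Finset.mem_univ i)]
          · simp
          · rcases rchi_cases (hz i) with h | h <;> rw [h] at hi ⊢ <;>
              cases ht : t i <;> simp [sg, ht] at hi ⊢
    refine (Finset.sum_le_sum fun p _ => hb p).trans ?_
    rw [Finset.sum_boole]
    exact_mod_cast zset_card F h2
  calc _ = |(((cset F t).card : ℝ) - M) + (M - (q : ℝ) ^ 2 / 2 ^ 16)| := by congr 1; ring
    _ ≤ _ := abs_add_le _ _
    _ ≤ _ := by linarith

end Equi

section Charac

/-- squareness as a boolean -/
def sqb {F : Type*} [Field F] (x : F) : Bool := decide (IsSquare x)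

/-- nonzero with prescribed squareness -/
def VV {F : Type*} [Field F] (x : F) (t : Bool) : Prop := x ≠ 0 ∧ sqb x = t

lemma sqb_rchi {F : Type*} [Field F] [Fintype F] {x : F} (hx : x ≠ 0) :
    sqb x = true ↔ rchi x = 1 := by
  have h1 : sqb x = true ↔ IsSquare x := by unfold sqb; simp
  rw [h1, rchi]
  have h2 := quadraticChar_one_iff_isSquare hx
  rw [← h2]
  norm_cast

lemma VV_mul {F : Type*} [Field F] [Fintype F] {x y : F} {s t : Bool} (hx : VV x s) (hy : VV y t) :
    VV (x * y) (s == t) := by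
  refine ⟨mul_ne_zero hx.1 hy.1, ?_⟩
  have h1 := sqb_rchi hx.1
  have h2 := sqb_rchi hy.1
  have h3 := sqb_rchi (mul_ne_zero hx.1 hy.1)
  rw [rchi_mul] at h3
  rw [← hx.2, ← hy.2]
  rcases rchi_cases hx.1 with e1 | e1 <;> rcases rchi_cases hy.1 with e2 | e2 <;>
    rw [e1] at h1 h3 <;> rw [e2] at h2 h3 <;> norm_num at h1 h2 h3 <;> simp [h1, h2, h3]

lemma VV_neg {F : Type*} [Field F] [Fintype F] (hm : IsSquare (-1 : F)) {x : F} {s : Bool}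
    (hx : VV x s) : VV (-x) s := by
  have h1 : VV (-1 : F) true := ⟨by simp, by simp [sqb, hm]⟩
  have := VV_mul h1 hx
  simpa using this

lemma VV_of {F : Type*} [Field F] {x y : F} {s t : Bool} (hy : VV y s) (h : x = y) (hs : t = s) :
    VV x t := by rw [h, hs]; exact hy

/-- the four forms of the associativity equation -/
def fB {F : Type*} [Field F] (_c1 c2 c3 c4 : F) : F := c2 * c4 - c3
/-- second form -/
def fA {F : Type*} [Field F] (c1 _c2 c3 c4 : F) : F := c4 - c1 - c3 + c1 * c3
/-- third form -/
def fC {F : Type*} [Field F] (c1 c2 _c3 c4 : F) : F := c4 * (1 - c2 + c1 * c2) - c1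
/-- fourth form -/
def fD {F : Type*} [Field F] (c1 c2 c3 _c4 : F) : F := c3 * (1 - c2 + c1 * c2) - c1 * c2

/-- quadruple of values -/
def VQ {F : Type*} [Field F] (c1 c2 c3 c4 : F) (tB tA tC tD : Bool) : Prop :=
  VV (fB c1 c2 c3 c4) tB ∧ VV (fA c1 c2 c3 c4) tA ∧ VV (fC c1 c2 c3 c4) tC ∧ VV (fD c1 c2 c3 c4) tD

/-- choose -/
def pk {F : Type*} (a b : F) (e : Bool) : F := bif e then a else b

/-- no solution with first class `a` -/
def HP {F : Type*} [Field F] (a b : F) : Prop := ∀ r2 r3 r4 : Bool,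
  ¬ ((sqb (fB a (pk a b r2) (pk a b r3) (pk a b r4)) ==
      sqb (fA a (pk a b r2) (pk a b r3) (pk a b r4))) = r2 ∧
    (sqb (fB a (pk a b r2) (pk a b r3) (pk a b r4)) ==
      sqb (fC a (pk a b r2) (pk a b r3) (pk a b r4))) = r3 ∧
    (sqb (fB a (pk a b r2) (pk a b r3) (pk a b r4)) ==
      sqb (fD a (pk a b r2) (pk a b r3) (pk a b r4))) = r4)

/-- boolean form of the condition -/
def Hs (α β p1 p2 p3 p4 p4' p5 p6 : Bool) : Bool :=
  !(α && β) && !(p2 != (α == β) && p3 != (α == β)) &&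
  !(!β && p1 == (α == β) && p2 == (α == β)) &&
  !(!α && p4 == (α == β) && p3 == (α == β)) &&
  !(p1 != p4' && (β == p5) == p4' && (α == p6) == p1)

lemma half_facts {F : Type*} [Field F] [Fintype F] (hm : IsSquare (-1 : F)) (a b : F)
    (α β p1 p2 p3 p4 p4' p5 p6 : Bool)
    (ha : VV a α) (ha1 : VV (1 - a) β) (hb : VV b α) (hb1 : VV (1 - b) β)
    (h1 : VV (b - 2 * a + a ^ 2) p1) (h2 : VV (b * (1 - a + a ^ 2) - a) p2)
    (h3 : VV (b * (1 - a + a ^ 2) - a ^ 2) p3) (h4 : VV (a ^ 2 - b) p4) (h4' : VV (b ^ 2 - a) p4')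
    (h5 : VV (a * b + a - b) p5) (h6 : VV (1 - 2 * b + a * b) p6) :
    (∀ r2 r3 r4, ∃ tB tA tC tD, VQ a (pk a b r2) (pk a b r3) (pk a b r4) tB tA tC tD) ∧
    (HP a b ↔ Hs α β p1 p2 p3 p4 p4' p5 p6 = true) := by
  have q1 : VQ a a a a (α == β) (α == β) β α := by
    refine ⟨VV_of (VV_neg hm (VV_mul ha ha1)) ?_ ?_, VV_of (VV_neg hm (VV_mul ha ha1)) ?_ ?_,
      VV_of (VV_neg hm (VV_mul (VV_mul ha ha) ha1)) ?_ ?_,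
      VV_of (VV_mul (VV_mul ha ha1) ha1) ?_ ?_⟩ <;>
    first | (simp only [fA, fB, fC, fD]; ring) | (cases α <;> cases β <;> rfl)
  have q2 : VQ a a a b (α == β) p1 p2 α := by
    refine ⟨VV_of (VV_neg hm (VV_mul ha hb1)) ?_ ?_, VV_of h1 ?_ ?_,
      VV_of h2 ?_ ?_, VV_of (VV_mul (VV_mul ha ha1) ha1) ?_ ?_⟩ <;>
    first | (simp only [fA, fB, fC, fD]; ring) | (cases α <;> cases β <;> rfl)
  have q3 : VQ a a b a p4 (α == β) β p3 := by
    refine ⟨VV_of h4 ?_ ?_, VV_of (VV_neg hm (VV_mul hb ha1)) ?_ ?_,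
      VV_of (VV_neg hm (VV_mul (VV_mul ha ha) ha1)) ?_ ?_, VV_of h3 ?_ ?_⟩ <;>
    first | (simp only [fA, fB, fC, fD]; ring) | (cases α <;> cases β <;> rfl)
  have q4 : VQ a a b b (α == β) (α == β) p2 p3 := by
    refine ⟨VV_of (VV_neg hm (VV_mul hb ha1)) ?_ ?_, VV_of (VV_neg hm (VV_mul ha hb1)) ?_ ?_,
      VV_of h2 ?_ ?_, VV_of h3 ?_ ?_⟩ <;>
    first | (simp only [fA, fB, fC, fD]; ring) | (cases α <;> cases β <;> rfl)
  have q5 : VQ a b a a (α == β) (α == β) β (α == p6) := by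
    refine ⟨VV_of (VV_neg hm (VV_mul ha hb1)) ?_ ?_, VV_of (VV_neg hm (VV_mul ha ha1)) ?_ ?_,
      VV_of (VV_neg hm (VV_mul (VV_mul ha hb) ha1)) ?_ ?_, VV_of (VV_mul ha h6) ?_ ?_⟩ <;>
    first | (simp only [fA, fB, fC, fD]; ring) | (cases α <;> cases β <;> rfl)
  have q6 : VQ a b a b p4' p1 (β == p5) (α == p6) := by
    refine ⟨VV_of h4' ?_ ?_, VV_of h1 ?_ ?_,
      VV_of (VV_neg hm (VV_mul hb1 h5)) ?_ ?_, VV_of (VV_mul ha h6) ?_ ?_⟩ <;>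
    first | (simp only [fA, fB, fC, fD]; ring) | (cases α <;> cases β <;> rfl)
  have q7 : VQ a b b a (α == β) (α == β) β α := by
    refine ⟨VV_of (VV_neg hm (VV_mul hb ha1)) ?_ ?_, VV_of (VV_neg hm (VV_mul hb ha1)) ?_ ?_,
      VV_of (VV_neg hm (VV_mul (VV_mul ha hb) ha1)) ?_ ?_,
      VV_of (VV_mul (VV_mul hb ha1) hb1) ?_ ?_⟩ <;>
    first | (simp only [fA, fB, fC, fD]; ring) | (cases α <;> cases β <;> rfl)
  have q8 : VQ a b b b (α == β) (α == β) (β == p5) α := by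
    refine ⟨VV_of (VV_neg hm (VV_mul hb hb1)) ?_ ?_, VV_of (VV_neg hm (VV_mul ha hb1)) ?_ ?_,
      VV_of (VV_neg hm (VV_mul hb1 h5)) ?_ ?_,
      VV_of (VV_mul (VV_mul hb ha1) hb1) ?_ ?_⟩ <;>
    first | (simp only [fA, fB, fC, fD]; ring) | (cases α <;> cases β <;> rfl)
  constructor
  · intro r2 r3 r4
    cases r2 <;> cases r3 <;> cases r4 <;> simp only [pk, cond_true, cond_false]
    exacts [⟨_, _, _, _, q8⟩, ⟨_, _, _, _, q7⟩, ⟨_, _, _, _, q6⟩, ⟨_, _, _, _, q5⟩,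
      ⟨_, _, _, _, q4⟩, ⟨_, _, _, _, q3⟩, ⟨_, _, _, _, q2⟩, ⟨_, _, _, _, q1⟩]
  · simp only [HP, Bool.forall_bool, pk, cond_true, cond_false]
    rw [q1.1.2, q1.2.1.2, q1.2.2.1.2, q1.2.2.2.2, q2.1.2, q2.2.1.2, q2.2.2.1.2, q2.2.2.2.2,
      q3.1.2, q3.2.1.2, q3.2.2.1.2, q3.2.2.2.2, q4.1.2, q4.2.1.2, q4.2.2.1.2, q4.2.2.2.2,
      q5.1.2, q5.2.1.2, q5.2.2.1.2, q5.2.2.2.2, q6.1.2, q6.2.1.2, q6.2.2.1.2, q6.2.2.2.2,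
      q7.1.2, q7.2.1.2, q7.2.2.1.2, q7.2.2.2.2, q8.1.2, q8.2.1.2, q8.2.2.1.2, q8.2.2.2.2]
    clear q1 q2 q3 q4 q5 q6 q7 q8 ha ha1 hb hb1 h1 h2 h3 h4 h4' h5 h6
    cases α <;> cases β <;> cases p1 <;> cases p2 <;> cases p3 <;> cases p4 <;> cases p4' <;>
      cases p5 <;> cases p6 <;> simp [Hs]

lemma exists_scale {F : Type*} [Field F] [Fintype F] (h2 : ringChar F ≠ 2)
    {x1 x2 x3 x4 : F} {t1 t2 t3 t4 : Bool} (h1 : VV x1 t1) (hx2 : VV x2 t2) (h3 : VV x3 t3)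
    (h4 : VV x4 t4) (e1 e2 e3 e4 : Bool) :
    (∃ s : F, s ≠ 0 ∧ sqb (s * x1) = e1 ∧ sqb (s * x2) = e2 ∧ sqb (s * x3) = e3 ∧
      sqb (s * x4) = e4) ↔
    ((t1 == t2) = (e1 == e2) ∧ (t1 == t3) = (e1 == e3) ∧ (t1 == t4) = (e1 == e4)) := by
  constructor
  · rintro ⟨s, hs, rfl, rfl, rfl, rfl⟩
    have hV : VV s (sqb s) := ⟨hs, rfl⟩
    rw [(VV_mul hV h1).2, (VV_mul hV hx2).2, (VV_mul hV h3).2, (VV_mul hV h4).2]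
    cases sqb s <;> cases t1 <;> cases t2 <;> cases t3 <;> cases t4 <;> simp
  · intro h
    obtain ⟨n, hn⟩ := FiniteField.exists_nonsquare (F := F) h2
    have hnV : VV n false := ⟨by rintro rfl; exact hn (IsSquare.zero), by simp [sqb, hn]⟩
    have h1V : VV (1 : F) true := ⟨one_ne_zero, by simp [sqb]⟩
    have : ∃ s : F, VV s (t1 == e1) := by
      cases t1 == e1
      · exact ⟨n, hnV⟩
      · exact ⟨1, h1V⟩
    obtain ⟨s, hs⟩ := this
    refine ⟨s, hs.1, ?_⟩
    rw [(VV_mul hs h1).2, (VV_mul hs hx2).2, (VV_mul hs h3).2, (VV_mul hs h4).2]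
    revert h
    cases t1 <;> cases t2 <;> cases t3 <;> cases t4 <;> cases e1 <;> cases e2 <;> cases e3 <;>
      cases e4 <;> simp

lemma qop_eq {F : Type*} [Field F] (a b u v : F) :
    qop a b u v = u + pk a b (sqb (v - u)) * (v - u) := by
  unfold qop pk sqb
  by_cases h : IsSquare (v - u) <;> simp [h]

lemma not_maxNA_iff {F : Type*} [Field F] [Fintype F] (hm : IsSquare (-1 : F)) (a b : F)
    (hnz : ∀ e1 e2 e3 e4 : Bool, fB (pk a b e1) (pk a b e2) (pk a b e3) (pk a b e4) ≠ 0) :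
    ¬ MaxNA a b ↔ ∃ e1 e2 e3 e4 : Bool, ∃ s : F, s ≠ 0 ∧
      sqb (s * fB (pk a b e1) (pk a b e2) (pk a b e3) (pk a b e4)) = e1 ∧
      sqb (s * fA (pk a b e1) (pk a b e2) (pk a b e3) (pk a b e4)) = e2 ∧
      sqb (s * fC (pk a b e1) (pk a b e2) (pk a b e3) (pk a b e4)) = e3 ∧
      sqb (s * fD (pk a b e1) (pk a b e2) (pk a b e3) (pk a b e4)) = e4 := by
  have hneg : ∀ x : F, sqb (-x) = sqb x := by
    intro x
    by_cases hx : x = 0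
    · simp [hx]
    · exact (VV_neg hm (x := x) (s := sqb x) ⟨hx, rfl⟩).2
  constructor
  · intro h
    unfold MaxNA at h
    push Not at h
    obtain ⟨u, v, w, heq, hne⟩ := h
    obtain ⟨e1, he1⟩ : ∃ e, e = sqb (v - u) := ⟨_, rfl⟩
    obtain ⟨e2, he2⟩ : ∃ e, e = sqb (w - v) := ⟨_, rfl⟩
    rw [qop_eq a b u v, qop_eq a b v w, ← he1, ← he2, qop_eq, qop_eq] at heq
    obtain ⟨e3, he3⟩ : ∃ e, e = sqb (w - (u + pk a b e1 * (v - u))) := ⟨_, rfl⟩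
    obtain ⟨e4, he4⟩ : ∃ e, e = sqb (v + pk a b e2 * (w - v) - u) := ⟨_, rfl⟩
    rw [← he3, ← he4] at heq
    have hB := hnz e1 e2 e3 e4
    refine ⟨e1, e2, e3, e4, ?_⟩
    generalize hc1 : pk a b e1 = c1 at *
    generalize hc2 : pk a b e2 = c2 at *
    generalize hc3 : pk a b e3 = c3 at *
    generalize hc4 : pk a b e4 = c4 at *
    have hlin : (u - v) * fA c1 c2 c3 c4 = (w - v) * fB c1 c2 c3 c4 := by
      unfold fA fB
      linear_combination heq
    have huv : u - v ≠ 0 := by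
      intro h0
      rw [h0, zero_mul] at hlin
      have h1 : w - v = 0 := (mul_eq_zero.mp hlin.symm).resolve_right hB
      exact hne (sub_eq_zero.mp h0) (sub_eq_zero.mp h1).symm
    obtain ⟨s, hs⟩ : ∃ s, s = (u - v) / fB c1 c2 c3 c4 := ⟨_, rfl⟩
    have hsB : s * fB c1 c2 c3 c4 = u - v := by rw [hs]; field_simp
    have hsA : s * fA c1 c2 c3 c4 = w - v := by
      rw [hs]; field_simp; linear_combination hlin
    refine ⟨s, ?_, ?_, ?_, ?_, ?_⟩
    · rintro rfl; rw [zero_mul] at hsB; exact huv hsB.symm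
    · rw [hsB, he1, ← hneg, neg_sub]
    · rw [hsA, he2]
    · rw [he3]; congr 1
      have : fC c1 c2 c3 c4 = fA c1 c2 c3 c4 - (1 - c1) * fB c1 c2 c3 c4 := by
        unfold fA fB fC; ring
      rw [this]; linear_combination hsA - (1 - c1) * hsB
    · rw [he4]; congr 1
      have : fD c1 c2 c3 c4 = c2 * fA c1 c2 c3 c4 - fB c1 c2 c3 c4 := by
        unfold fA fB fD; ring
      rw [this]; linear_combination c2 * hsA - hsB
  · rintro ⟨e1, e2, e3, e4, s, hs, g1, g2, g3, g4⟩ hM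
    have hB := hnz e1 e2 e3 e4
    generalize hc1 : pk a b e1 = c1 at *
    generalize hc2 : pk a b e2 = c2 at *
    generalize hc3 : pk a b e3 = c3 at *
    generalize hc4 : pk a b e4 = c4 at *
    have := (hM (s * fB c1 c2 c3 c4) 0 (s * fA c1 c2 c3 c4) ?_).1
    · exact (mul_ne_zero hs hB) this
    · rw [qop_eq a b _ 0, qop_eq a b 0 _]
      rw [zero_sub, hneg, g1, sub_zero, g2, hc1, hc2, qop_eq, qop_eq]
      have e3' : s * fA c1 c2 c3 c4 - (s * fB c1 c2 c3 c4 + c1 * -(s * fB c1 c2 c3 c4)) =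
          s * fC c1 c2 c3 c4 := by unfold fA fB fC; ring
      have e4' : 0 + c2 * (s * fA c1 c2 c3 c4) - s * fB c1 c2 c3 c4 = s * fD c1 c2 c3 c4 := by
        unfold fA fB fD; ring
      rw [e3', e4', g3, g4, hc3, hc4]
      unfold fB fC fD; ring

lemma maxNA_iff {F : Type*} [Field F] [Fintype F] (h2 : ringChar F ≠ 2)
    (hm : IsSquare (-1 : F)) (a b : F)
    (hA : ∀ r2 r3 r4, ∃ tB tA tC tD, VQ a (pk a b r2) (pk a b r3) (pk a b r4) tB tA tC tD)
    (hB : ∀ r2 r3 r4, ∃ tB tA tC tD, VQ b (pk b a r2) (pk b a r3) (pk b a r4) tB tA tC tD) :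
    MaxNA a b ↔ HP a b ∧ HP b a := by
  have hpk : ∀ e, pk b a (!e) = pk a b e := by intro e; cases e <;> rfl
  have hV : ∀ e1 e2 e3 e4, ∃ tB tA tC tD,
      VQ (pk a b e1) (pk a b e2) (pk a b e3) (pk a b e4) tB tA tC tD := by
    intro e1 e2 e3 e4
    cases e1
    · have := hB (!e2) (!e3) (!e4)
      rwa [hpk, hpk, hpk] at this
    · exact hA e2 e3 e4
  rw [← not_iff_not, not_maxNA_iff hm a b (fun e1 e2 e3 e4 => by
    obtain ⟨_, _, _, _, h⟩ := hV e1 e2 e3 e4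
    exact h.1.1)]
  have hS : ∀ e1 e2 e3 e4 : Bool, (∃ s : F, s ≠ 0 ∧
      sqb (s * fB (pk a b e1) (pk a b e2) (pk a b e3) (pk a b e4)) = e1 ∧
      sqb (s * fA (pk a b e1) (pk a b e2) (pk a b e3) (pk a b e4)) = e2 ∧
      sqb (s * fC (pk a b e1) (pk a b e2) (pk a b e3) (pk a b e4)) = e3 ∧
      sqb (s * fD (pk a b e1) (pk a b e2) (pk a b e3) (pk a b e4)) = e4) ↔ _ := fun e1 e2 e3 e4 => by
    obtain ⟨_, _, _, _, h⟩ := hV e1 e2 e3 e4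
    exact exists_scale h2 ⟨h.1.1, rfl⟩ ⟨h.2.1.1, rfl⟩ ⟨h.2.2.1.1, rfl⟩ ⟨h.2.2.2.1, rfl⟩ e1 e2 e3 e4
  simp only [hS]
  unfold HP
  rw [not_and_or]
  push Not
  constructor
  · rintro ⟨e1, e2, e3, e4, h⟩
    cases e1
    · right
      refine ⟨!e2, !e3, !e4, ?_⟩
      rw [hpk, hpk, hpk]
      simpa [pk] using h
    · left
      refine ⟨e2, e3, e4, ?_⟩
      simpa [pk] using h
  · rintro (⟨r2, r3, r4, h⟩ | ⟨r2, r3, r4, h⟩)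
    · refine ⟨true, r2, r3, r4, ?_⟩
      simpa [pk] using h
    · refine ⟨false, !r2, !r3, !r4, ?_⟩
      have hpk' : ∀ e, pk a b (!e) = pk b a e := by intro e; cases e <;> rfl
      rw [hpk', hpk', hpk']
      simpa [pk] using h

end Charac

section Final

/-- curried boolean functions -/
def Cur : ℕ → Type
  | 0 => Bool
  | n + 1 => Bool → Cur n

/-- number of `true` values of a curried boolean function -/
def cntc : (n : ℕ) → Cur n → ℕ
  | 0, f => Bool.toNat f
  | n + 1, f => cntc n (f true) + cntc n (f false)

/-- uncurrying -/
def appc : (n : ℕ) → Cur n → (Fin n → Bool) → Bool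
  | 0, f, _ => f
  | n + 1, f, t => appc n (f (t 0)) (fun i => t i.succ)

lemma sum_appc : ∀ (n : ℕ) (f : Cur n), ∑ t : Fin n → Bool, (appc n f t).toNat = cntc n f
  | 0, f => by simp [appc, cntc]
  | n + 1, f => by
    rw [← (Fin.consEquiv (fun _ : Fin (n + 1) => Bool)).sum_comp, Fintype.sum_prod_type,
      Fintype.sum_bool, cntc, ← sum_appc n, ← sum_appc n]
    simp [appc, Fin.consEquiv]

/-- the good sign patterns, curried -/
def Gc (x0 x1 x2 x3 x4 x5 x6 x7 x8 x9 x10 x11 x12 x13 x14 x15 : Bool) : Bool :=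
  (x0 == x2) && (x1 == x3) && Hs x0 x1 x4 x5 x6 x7 x15 x8 x9 && Hs x0 x1 x12 x13 x14 x15 x7 x10 x11

/-- the good sign patterns -/
def GG (t : Fin 16 → Bool) : Bool :=
  Gc (t 0) (t 1) (t 2) (t 3) (t 4) (t 5) (t 6) (t 7) (t 8) (t 9) (t 10) (t 11) (t 12) (t 13)
    (t 14) (t 15)

lemma cntc_Gc : cntc 16 Gc = 1906 := by
  decide +kernel

lemma card_GG : (Finset.univ.filter fun t : Fin 16 → Bool => GG t = true).card = 1906 := by
  rw [← cntc_Gc, ← sum_appc 16 Gc, Finset.card_filter]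
  refine Finset.sum_congr rfl fun t _ => ?_
  have : appc 16 Gc t = GG t := rfl
  rw [this]
  cases GG t <;> simp

lemma good_iff {F : Type*} [Field F] [Fintype F] (h2 : ringChar F ≠ 2)
    (hm : IsSquare (-1 : F)) (a b : F) (hne : a ≠ b) (hz : ∀ i, pv i a b ≠ 0) :
    ((a, b) ∈ SigSet F ∧ MaxNA a b) ↔ GG (fun i => sqb (pv i a b)) = true := by
  obtain ⟨t, ht⟩ : ∃ t : Fin 16 → Bool, t = fun i => sqb (pv i a b) := ⟨_, rfl⟩
  have hV : ∀ i, VV (pv i a b) (t i) := fun i => ⟨hz i, by rw [ht]⟩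
  rw [← ht]
  clear ht
  have v0 : VV a (t 0) := VV_of (hV 0) (by simp [pv]) rfl
  have v1 : VV (1 - a) (t 1) := VV_of (hV 1) (by simp [pv]) rfl
  have v2 : VV b (t 2) := VV_of (hV 2) (by simp [pv, bpol, dat, lev]) rfl
  have v3 : VV (1 - b) (t 3) := VV_of (hV 3) (by simp [pv, bpol, dat, lev]; try ring) rfl
  have v4 : VV (b - 2 * a + a ^ 2) (t 4) :=
    VV_of (hV 4) (by simp [pv, bpol, dat, lev]; try ring) rfl
  have v5 : VV (b * (1 - a + a ^ 2) - a) (t 5) :=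
    VV_of (hV 5) (by simp [pv, bpol, dat, lev]; try ring) rfl
  have v6 : VV (b * (1 - a + a ^ 2) - a ^ 2) (t 6) :=
    VV_of (hV 6) (by simp [pv, bpol, dat, lev]; try ring) rfl
  have v7 : VV (a ^ 2 - b) (t 7) := VV_of (hV 7) (by simp [pv, bpol, dat, lev]; try ring) rfl
  have v8 : VV (a * b + a - b) (t 8) := VV_of (hV 8) (by simp [pv, bpol, dat, lev]; try ring) rfl
  have v9 : VV (1 - 2 * b + a * b) (t 9) :=
    VV_of (hV 9) (by simp [pv, bpol, dat, lev]; try ring) rfl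
  have v10 : VV (b * a + b - a) (t 10) :=
    VV_of (hV 10) (by simp [pv, bpol, dat, lev]; try ring) rfl
  have v11 : VV (1 - 2 * a + b * a) (t 11) :=
    VV_of (hV 11) (by simp [pv, bpol, dat, lev]; try ring) rfl
  have v12 : VV (a - 2 * b + b ^ 2) (t 12) :=
    VV_of (hV 12) (by simp [pv, bpol, dat, lev]; try ring) rfl
  have v13 : VV (a * (1 - b + b ^ 2) - b) (t 13) :=
    VV_of (hV 13) (by simp [pv, bpol, dat, lev]; try ring) rfl
  have v14 : VV (a * (1 - b + b ^ 2) - b ^ 2) (t 14) :=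
    VV_of (hV 14) (by simp [pv, bpol, dat, lev]; try ring) rfl
  have v15 : VV (b ^ 2 - a) (t 15) := VV_of (hV 15) (by simp [pv, bpol, dat, lev]; try ring) rfl
  have sq_iff : ∀ x : F, IsSquare x ↔ sqb x = true := by intro x; unfold sqb; simp
  have hsig : (a, b) ∈ SigSet F ↔ (t 0 == t 2) = true ∧ (t 1 == t 3) = true := by
    unfold SigSet
    simp only [Set.mem_ofPred_eq]
    rw [sq_iff, sq_iff, (VV_mul v0 v2).2, (VV_mul v1 v3).2]
    constructor
    · rintro ⟨_, _, _, _, _, h, h'⟩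
      exact ⟨h, h'⟩
    · rintro ⟨h, h'⟩
      exact ⟨hne, v0.1, fun e => v1.1 (by rw [e, sub_self]), v2.1,
        fun e => v3.1 (by rw [e, sub_self]), h, h'⟩
  rw [hsig]
  unfold GG Gc
  by_cases h02 : t 2 = t 0
  · by_cases h13 : t 3 = t 1
    · rw [h02] at v2
      rw [h13] at v3
      have H1 := half_facts hm a b _ _ _ _ _ _ _ _ _ v0 v1 v2 v3 v4 v5 v6 v7 v15 v8 v9
      have H2 := half_facts hm b a _ _ _ _ _ _ _ _ _ v2 v3 v0 v1 v12 v13 v14 v15 v7 v10 v11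
      rw [maxNA_iff h2 hm a b H1.1 H2.1, H1.2, H2.2, h02, h13]
      simp
    · have : (t 1 == t 3) = false := by simp [Ne.symm h13]
      simp [this]
  · have : (t 0 == t 2) = false := by simp [Ne.symm h02]
    simp [this]

lemma sigma_approx (F : Type) [Field F] [Fintype F] (hq : Fintype.card F % 4 = 1) :
    |(sigmaCount F : ℝ) - ∑ t ∈ Finset.univ.filter (fun t : Fin 16 → Bool => GG t = true),
      ((cset F t).card : ℝ)| ≤ 1571 * Fintype.card F := by
  have h2 : ringChar F ≠ 2 := by
    intro h2
    have := FiniteField.even_card_of_char_two h2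
    omega
  have h2' : (2 : F) ≠ 0 := Ring.two_ne_zero h2
  have hm : IsSquare (-1 : F) := by
    rw [FiniteField.isSquare_neg_one_iff]
    omega
  set T := Finset.univ.filter (fun t : Fin 16 → Bool => GG t = true) with hT
  set A : Finset (F × F) := Finset.univ.filter fun p => p ∈ SigSet F ∧ MaxNA p.1 p.2 with hA
  clear_value T A
  set B : Finset (F × F) := T.biUnion fun t => cset F t with hB
  set E : Finset (F × F) := zset F ∪ Finset.univ.image (fun a : F => (a, a)) with hE
  clear_value B E
  have hAc : sigmaCount F = A.card := by
    unfold sigmaCount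
    rw [← Set.ncard_coe_finset, hA]
    congr 1
    ext p
    simp
  have sgsq : ∀ (x : F) (t : Bool), rchi x = sg t → sqb x = t := by
    intro x t h
    have hx : x ≠ 0 := by
      rintro rfl
      rw [rchi_zero] at h
      cases t <;> simp [sg] at h
    have := sqb_rchi hx
    rw [h] at this
    cases t
    · simp only [sg] at this
      norm_num at this
      exact this
    · exact this.mpr (by simp [sg])
  have hBc : B.card = ∑ t ∈ T, (cset F t).card := by
    rw [hB, Finset.card_biUnion]
    intro s _ t _ hst
    change Disjoint _ _
    rw [Finset.disjoint_left]
    intro p hp hp'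
    apply hst
    funext i
    have e1 := sgsq _ _ ((Finset.mem_filter.mp hp).2 i)
    have e2 := sgsq _ _ ((Finset.mem_filter.mp hp').2 i)
    rw [← e1, e2]
  have hEc : E.card ≤ 1571 * Fintype.card F := by
    have h1 := zset_card F h2'
    have h3 : (Finset.univ.image (fun a : F => (a, a))).card ≤ Fintype.card F :=
      Finset.card_image_le
    rw [hE]
    refine (Finset.card_union_le _ _).trans ?_
    refine (Nat.add_le_add h1 h3).trans ?_
    omega
  have key : ∀ p : F × F, p ∉ E → (p ∈ A ↔ p ∈ B) := by
    rintro ⟨a, b⟩ hp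
    have hz : ∀ i, pv i a b ≠ 0 := by
      intro i hi
      apply hp
      rw [hE, Finset.mem_union]
      left
      exact Finset.mem_filter.mpr ⟨Finset.mem_univ _, i, hi⟩
    have hne : a ≠ b := by
      rintro rfl
      apply hp
      rw [hE, Finset.mem_union]
      right
      exact Finset.mem_image.mpr ⟨a, Finset.mem_univ _, rfl⟩
    have h := good_iff h2 hm a b hne hz
    have hA' : (a, b) ∈ A ↔ ((a, b) ∈ SigSet F ∧ MaxNA a b) := by rw [hA]; simp
    rw [hA', h, hB, Finset.mem_biUnion]
    constructor
    · intro hg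
      refine ⟨fun i => sqb (pv i a b), by rw [hT]; exact Finset.mem_filter.mpr ⟨Finset.mem_univ _, hg⟩, ?_⟩
      refine Finset.mem_filter.mpr ⟨Finset.mem_univ _, fun i => ?_⟩
      have hs := sqb_rchi (hz i)
      rcases rchi_cases (hz i) with e | e
      · have := hs.mpr e
        simp only
        rw [this, e]; simp [sg]
      · have : sqb (pv i a b) = false := by
          rw [e] at hs
          norm_num at hs
          exact hs
        simp only
        rw [this, e]; simp [sg]
    · rintro ⟨t, ht, hc⟩
      have : (fun i => sqb (pv i a b)) = t := by
        funext i
        exact sgsq _ _ ((Finset.mem_filter.mp hc).2 i)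
      rw [this]
      rw [hT] at ht
      exact (Finset.mem_filter.mp ht).2
  have hAB : A.card ≤ B.card + E.card := by
    refine (Finset.card_le_card ?_).trans (Finset.card_union_le B E)
    intro p hp
    rw [Finset.mem_union]
    by_cases hpE : p ∈ E
    · exact Or.inr hpE
    · exact Or.inl ((key p hpE).mp hp)
  have hBA : B.card ≤ A.card + E.card := by
    refine (Finset.card_le_card ?_).trans (Finset.card_union_le A E)
    intro p hp
    rw [Finset.mem_union]
    by_cases hpE : p ∈ E
    · exact Or.inr hpE
    · exact Or.inl ((key p hpE).mpr hp)
  rw [hAc, ← Nat.cast_sum, ← hBc]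
  have h1 : (A.card : ℝ) ≤ B.card + 1571 * Fintype.card F := by exact_mod_cast (by omega)
  have h3 : (B.card : ℝ) ≤ A.card + 1571 * Fintype.card F := by exact_mod_cast (by omega)
  rw [abs_le]
  constructor <;> linarith

end Final

/-- As `q` runs through prime powers with `q ≡ 1 (mod 4)`, `σ(q)/q²` converges
to `953·2⁻¹⁵`. -/
theorem sigma_ratio_tendsto_one_mod_four :
    ∀ ε : ℝ, 0 < ε → ∃ N : ℕ,
      ∀ (q : ℕ) (F : Type) [Field F] [Fintype F],
        Fintype.card F = q → q % 4 = 1 → q > N →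
        |(sigmaCount F : ℝ) / (q : ℝ) ^ 2 - 953 / 2 ^ 15| < ε := by
  intro ε hε
  obtain ⟨N, hN⟩ := equi (ε / 4000) (by positivity)
  obtain ⟨M, hM⟩ := exists_nat_gt (20000000 / ε)
  refine ⟨max N M, ?_⟩
  intro q F _ _ hc hq hgt
  have hqN : N < q := lt_of_le_of_lt (le_max_left _ _) hgt
  have hqM : M < q := lt_of_le_of_lt (le_max_right _ _) hgt
  have happ := sigma_approx F (by rw [hc]; exact hq)
  have hequi := hN F (by rw [hc]; omega) (by rw [hc]; exact hqN)
  rw [hc] at happ hequi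
  have hq0 : (0 : ℝ) < q := by
    have : 0 < q := by omega
    exact_mod_cast this
  have hqε : 20000000 < ε * q := by
    have h1 : (M : ℝ) < q := by exact_mod_cast hqM
    have h3 := hM.trans h1
    rw [div_lt_iff₀ hε] at h3
    linarith
  have hsum : |∑ t ∈ Finset.univ.filter (fun t : Fin 16 → Bool => GG t = true),
      ((cset F t).card : ℝ) - 1906 * ((q : ℝ) ^ 2 / 2 ^ 16)| ≤
      1906 * (ε / 4000 * (q : ℝ) ^ 2 + 3106 * q) := by
    have h1 : 1906 * ((q : ℝ) ^ 2 / 2 ^ 16) =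
        ∑ t ∈ Finset.univ.filter (fun t : Fin 16 → Bool => GG t = true),
          ((q : ℝ) ^ 2 / 2 ^ 16) := by
      rw [Finset.sum_const, card_GG, nsmul_eq_mul]
      norm_num
    rw [h1, ← Finset.sum_sub_distrib]
    refine (Finset.abs_sum_le_sum_abs _ _).trans ?_
    refine (Finset.sum_le_card_nsmul _ _ _ fun t _ => hequi t).trans ?_
    rw [card_GG, nsmul_eq_mul]
    norm_num
  have hq2 : (0 : ℝ) < (q : ℝ) ^ 2 := by positivity
  have heq : (sigmaCount F : ℝ) / (q : ℝ) ^ 2 - 953 / 2 ^ 15 =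
      ((sigmaCount F : ℝ) - 1906 * ((q : ℝ) ^ 2 / 2 ^ 16)) / (q : ℝ) ^ 2 := by
    field_simp
    ring
  rw [heq, abs_div, abs_of_pos hq2, div_lt_iff₀ hq2]
  rw [abs_le] at happ hsum
  have hqq : 20000000 * (q : ℝ) < ε * (q : ℝ) ^ 2 := by nlinarith
  rw [abs_lt]
  constructor <;> nlinarith
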